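/- arXiv:1607.06189 — 4 statements merged into one kernel-verified Lean document; each statement's English description precedes it below -/
import Mathlib

section
/- Let R be a Noetherian local ring and let X, Y be finitely generated R-modules. Then there is an isomorphism of R-modules stHom_R(X, ΩY) ≅ stHom_R(Ω^{-1}X, Y), natural in X and Y. -/
/-!
Common definitions: Cohen-Macaulay modules, isolated singularities, stable Hom,
syzygies, transposes, Auslander-Reiten sequences, and the Grothendieck-type groups
`G(CM(R))`, `Ex(CM(R))`, `AR(CM(R))` from the paper
"Syzygies of Cohen-Macaulay modules and Grothendieck groups".

Throughout, the maximal ideal of a local ring is realized as the Jacobson radical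
`(⊥ : Ideal R).jacobson` (for a local ring these coincide), which lets the definitions
make sense without a `IsLocalRing` instance argument.
-/

namespace Paper

/-- A regular local ring: a Noetherian local ring whose maximal ideal (= Jacobson radical
of `⊥`) can be generated by `dim A` elements. -/
def IsRegularLocalRing (A : Type) [CommRing A] : Prop :=
  IsNoetherianRing A ∧ IsLocalRing A ∧
    ∃ s : Finset A, Ideal.span (s : Set A) = (⊥ : Ideal A).jacobson ∧
      (s.card : WithBot ℕ∞) = ringKrullDim A

/-- `M` is a (maximal) Cohen-Macaulay `R`-module: it is finitely generated, and it is either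
zero or satisfies `depth M = dim R`, the latter being expressed by the existence of a weakly
`M`-regular sequence of length `dim R` consisting of elements of the maximal ideal
(equivalently, since `depth M ≤ dim R` always holds for nonzero finitely generated `M` over a
Noetherian local ring `R`). -/
def IsMCM (R : Type) [CommRing R] (M : Type) [AddCommGroup M] [Module R M] : Prop :=
  Module.Finite R M ∧ (Subsingleton M ∨
    ∃ rs : List R, (∀ x ∈ rs, x ∈ (⊥ : Ideal R).jacobson) ∧
      RingTheory.Sequence.IsWeaklyRegular M rs ∧
      (rs.length : WithBot ℕ∞) = ringKrullDim R)

/-- The local ring `R` has an isolated singularity: `R_p` is regular local for every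
prime `p` different from the maximal ideal. -/
def IsolatedSingularity (R : Type) [CommRing R] : Prop :=
  ∀ (p : Ideal R) (_ : p.IsPrime), p ≠ (⊥ : Ideal R).jacobson →
    IsRegularLocalRing (Localization p.primeCompl)

section StableHom

variable (R : Type) [CommRing R]

/-- The submodule of `Hom_R(M,N)` consisting of homomorphisms factoring through a
finitely generated free module. -/
def stSub (M N : Type) [AddCommGroup M] [Module R M] [AddCommGroup N] [Module R N] :
    Submodule R (M →ₗ[R] N) :=
  Submodule.span R {f | ∃ (n : ℕ) (g : M →ₗ[R] (Fin n → R)) (h : (Fin n → R) →ₗ[R] N),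
    f = h ∘ₗ g}

/-- The stable Hom module `stHom_R(M,N) = Hom_R(M,N)/{maps factoring through f.g. frees}`. -/
abbrev StHom (M N : Type) [AddCommGroup M] [Module R M] [AddCommGroup N] [Module R N] :=
  (M →ₗ[R] N) ⧸ stSub R M N

/-- The map `stHom_R(M,N) → stHom_R(M,N')` induced by postcomposition with `φ : N →ₗ[R] N'`. -/
def stMapLeft {M N N' : Type} [AddCommGroup M] [Module R M] [AddCommGroup N] [Module R N]
    [AddCommGroup N'] [Module R N'] (φ : N →ₗ[R] N') : StHom R M N →ₗ[R] StHom R M N' :=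
  Submodule.mapQ _ _ (LinearMap.llcomp R M N N' φ) (by
    rw [stSub, Submodule.span_le]
    rintro f ⟨n, g, h, rfl⟩
    exact Submodule.subset_span ⟨n, g, φ ∘ₗ h, rfl⟩)

/-- The map `stHom_R(M,N) → stHom_R(M',N)` induced by precomposition with `φ : M' →ₗ[R] M`. -/
def stMapRight {M M' N : Type} [AddCommGroup M] [Module R M] [AddCommGroup M'] [Module R M']
    [AddCommGroup N] [Module R N] (φ : M' →ₗ[R] M) : StHom R M N →ₗ[R] StHom R M' N :=
  Submodule.mapQ _ _ (LinearMap.lcomp R N φ) (by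
    rw [stSub, Submodule.span_le]
    rintro f ⟨n, g, h, rfl⟩
    exact Submodule.subset_span ⟨n, g ∘ₗ φ, h, rfl⟩)

end StableHom

section Syzygies

variable (R : Type) [CommRing R]

/-- `S` is (isomorphic to) a first syzygy of `M`: the kernel of a minimal free cover
`π : R^n → M` (minimality: `ker π ⊆ m·R^n`). -/
def IsSyzygyOf (S M : Type) [AddCommGroup S] [Module R S] [AddCommGroup M] [Module R M] :
    Prop :=
  ∃ (n : ℕ) (π : (Fin n → R) →ₗ[R] M), Function.Surjective π ∧
    LinearMap.ker π ≤ (⊥ : Ideal R).jacobson • (⊤ : Submodule R (Fin n → R)) ∧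
    Nonempty (S ≃ₗ[R] LinearMap.ker π)

/-- `S` belongs to `ΩCM(R)`: it is a first syzygy of some Cohen-Macaulay module. -/
def MemOmegaCM (S : Type) [AddCommGroup S] [Module R S] : Prop :=
  ∃ N : ModuleCat.{0} R, IsMCM R N ∧ IsSyzygyOf R S N

/-- `M` has a nonzero free direct summand. -/
def HasFreeSummand (M : Type) [AddCommGroup M] [Module R M] : Prop :=
  ∃ P : ModuleCat.{0} R, Nonempty (M ≃ₗ[R] (P × R))

/-- `M'` is the non-free part of `M`: it has no nonzero free direct summand and
`M ≅ M' ⊕ R^a` for some `a ≥ 0`. -/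
def IsNonfreePart (M M' : Type) [AddCommGroup M] [Module R M] [AddCommGroup M'] [Module R M'] :
    Prop :=
  ¬ HasFreeSummand R M' ∧ ∃ a : ℕ, Nonempty (M ≃ₗ[R] (M' × (Fin a → R)))

/-- `M` is an indecomposable module: nonzero, and in any decomposition `M ≅ P × Q`
one factor vanishes. -/
def Indecomp (M : Type) [AddCommGroup M] [Module R M] : Prop :=
  ¬ Subsingleton M ∧ ∀ (P Q : ModuleCat.{0} R), Nonempty (M ≃ₗ[R] (P × Q)) →
    Subsingleton P ∨ Subsingleton Q

/-- `A` is a direct summand of `B`. -/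
def IsSummandOf (A B : Type) [AddCommGroup A] [Module R A] [AddCommGroup B] [Module R B] :
    Prop :=
  ∃ C : ModuleCat.{0} R, Nonempty (B ≃ₗ[R] (A × C))

/-- A linear map is a split epimorphism if it has a right inverse. -/
def IsSplitEpi {M N : Type} [AddCommGroup M] [Module R M] [AddCommGroup N] [Module R N]
    (g : M →ₗ[R] N) : Prop :=
  ∃ s : N →ₗ[R] M, g ∘ₗ s = LinearMap.id

/-- `0 → A → B → C → 0` (given by `f`, `g`) is an Auslander-Reiten sequence: a non-split
short exact sequence of finitely generated modules with `A`, `C` indecomposable non-free,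
such that every non-split-epi map `X → C` from a finitely generated module factors
through `g : B → C`. -/
def IsARSequence {A B C : Type} [AddCommGroup A] [Module R A] [AddCommGroup B] [Module R B]
    [AddCommGroup C] [Module R C] (f : A →ₗ[R] B) (g : B →ₗ[R] C) : Prop :=
  Module.Finite R A ∧ Module.Finite R B ∧ Module.Finite R C ∧
  Function.Injective f ∧ Function.Surjective g ∧ Function.Exact f g ∧
  ¬ IsSplitEpi R g ∧
  Indecomp R A ∧ ¬ Module.Free R A ∧ Indecomp R C ∧ ¬ Module.Free R C ∧
  ∀ (X : ModuleCat.{0} R) (h : (X : Type) →ₗ[R] C), Module.Finite R X → ¬ IsSplitEpi R h →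
    ∃ l : (X : Type) →ₗ[R] B, g ∘ₗ l = h

/-- `R` is of finite CM type: finitely many isomorphism classes of indecomposable
Cohen-Macaulay modules. -/
def FiniteCMType : Prop :=
  ∃ L : List (ModuleCat.{0} R), ∀ U : ModuleCat.{0} R, IsMCM R U → Indecomp R U →
    ∃ V ∈ L, Nonempty ((U : Type) ≃ₗ[R] (V : Type))

/-- `R` is of finite ΩCM type: finitely many isomorphism classes of indecomposable
modules in `ΩCM(R)`. -/
def FiniteOmegaCMType : Prop :=
  ∃ L : List (ModuleCat.{0} R), ∀ U : ModuleCat.{0} R, Module.Finite R U → Indecomp R U →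
    MemOmegaCM R U → ∃ V ∈ L, Nonempty ((U : Type) ≃ₗ[R] (V : Type))

/-- There are only finitely many isomorphism classes of indecomposable direct summands of
first syzygies of Cohen-Macaulay `R`-modules. -/
def FiniteSyzygySummandType : Prop :=
  ∃ L : List (ModuleCat.{0} R), ∀ U : ModuleCat.{0} R, Module.Finite R U → Indecomp R U →
    (∃ S : ModuleCat.{0} R, MemOmegaCM R S ∧ IsSummandOf R (U : Type) S) →
    ∃ V ∈ L, Nonempty ((U : Type) ≃ₗ[R] (V : Type))

end Syzygies

section Grothendieck

variable (R : Type) [CommRing R]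

/-- The Cohen-Macaulay `R`-modules, as objects of `ModuleCat R`. -/
def CMMod := {M : ModuleCat.{0} R // IsMCM R M}

/-- The relations `[X] + [Z] - [Y]` with `Y ≅ X ⊕ Z`, defining `G(CM(R))` as a quotient
of the free abelian group on the Cohen-Macaulay modules. -/
def GRel : AddSubgroup (FreeAbelianGroup (CMMod R)) :=
  AddSubgroup.closure {a | ∃ X Z Y : CMMod R,
    Nonempty ((Y.1 : Type) ≃ₗ[R] ((X.1 : Type) × (Z.1 : Type))) ∧
    a = FreeAbelianGroup.of X + FreeAbelianGroup.of Z - FreeAbelianGroup.of Y}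

/-- The group `G(CM(R))`: the free abelian group on the isomorphism classes of
Cohen-Macaulay `R`-modules (realized as the free abelian group on all Cohen-Macaulay
modules modulo the direct sum relations). -/
abbrev GCM := FreeAbelianGroup (CMMod R) ⧸ GRel R

/-- The class of an element of the free abelian group in `G(CM(R))`. -/
def gcls : FreeAbelianGroup (CMMod R) →+ GCM R := QuotientAddGroup.mk' _

/-- The subgroup `Ex(CM(R))` of `G(CM(R))` generated by `[X]+[Z]-[Y]` coming from short
exact sequences `0 → Z → Y → X → 0` of Cohen-Macaulay modules. -/
def ExCM : AddSubgroup (GCM R) :=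
  AddSubgroup.closure {x | ∃ (X Z Y : CMMod R) (f : (Z.1 : Type) →ₗ[R] (Y.1 : Type))
    (g : (Y.1 : Type) →ₗ[R] (X.1 : Type)), Function.Injective f ∧ Function.Surjective g ∧
    Function.Exact f g ∧
    x = gcls R (FreeAbelianGroup.of X + FreeAbelianGroup.of Z - FreeAbelianGroup.of Y)}

/-- The subgroup `AR(CM(R))` of `G(CM(R))` generated by `[X]+[Z]-[Y]` coming from
Auslander-Reiten sequences `0 → Z → Y → X → 0` of Cohen-Macaulay modules. -/
def ARCM : AddSubgroup (GCM R) :=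
  AddSubgroup.closure {x | ∃ (X Z Y : CMMod R) (f : (Z.1 : Type) →ₗ[R] (Y.1 : Type))
    (g : (Y.1 : Type) →ₗ[R] (X.1 : Type)), IsARSequence R f g ∧
    x = gcls R (FreeAbelianGroup.of X + FreeAbelianGroup.of Z - FreeAbelianGroup.of Y)}

/-- The image of a subgroup `H ≤ G(CM(R))` in `G(CM(R)) ⊗_ℤ ℚ`: the `ℚ`-subspace spanned by
the image of `H`. The equality `ratSpan R (ExCM R) = ratSpan R (ARCM R)` expresses
`Ex(CM(R)) ⊗_ℤ ℚ = AR(CM(R)) ⊗_ℤ ℚ` inside `G(CM(R)) ⊗_ℤ ℚ`. -/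
def ratSpan (H : AddSubgroup (GCM R)) : Submodule ℚ (TensorProduct ℤ ℚ (GCM R)) :=
  Submodule.span ℚ {x | ∃ g ∈ H, x = (1 : ℚ) ⊗ₜ[ℤ] g}

end Grothendieck

section Transpose

variable (R : Type) [CommRing R]

/-- The data of a minimal free presentation `R^{n1} --d--> R^{n0} --p--> M → 0`. -/
structure PresData (M : Type) [AddCommGroup M] [Module R M] where
  n1 : ℕ
  n0 : ℕ
  d : (Fin n1 → R) →ₗ[R] (Fin n0 → R)
  p : (Fin n0 → R) →ₗ[R] M
  surj : Function.Surjective p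
  exact : LinearMap.range d = LinearMap.ker p
  min0 : LinearMap.ker p ≤ (⊥ : Ideal R).jacobson • (⊤ : Submodule R (Fin n0 → R))
  min1 : LinearMap.ker d ≤ (⊥ : Ideal R).jacobson • (⊤ : Submodule R (Fin n1 → R))

/-- The (Auslander) transpose determined by a minimal free presentation: the cokernel of
the dual map `(R^{n0})^* → (R^{n1})^*`. -/
abbrev TrOf {M : Type} [AddCommGroup M] [Module R M] (D : PresData R M) : Type :=
  Module.Dual R (Fin D.n1 → R) ⧸ LinearMap.range D.d.dualMap

/-- The data of a minimal free cover `p : R^n → M`. -/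
structure SyzData (M : Type) [AddCommGroup M] [Module R M] where
  n : ℕ
  p : (Fin n → R) →ₗ[R] M
  surj : Function.Surjective p
  min : LinearMap.ker p ≤ (⊥ : Ideal R).jacobson • (⊤ : Submodule R (Fin n → R))

/-- The first syzygy determined by a minimal free cover. -/
abbrev SyzOf {M : Type} [AddCommGroup M] [Module R M] (D : SyzData R M) : Type :=
  LinearMap.ker D.p

/-- The data needed to construct `Ω⁻¹ M = Tr Ω Tr M`. -/
structure CosyzData (M : Type) [AddCommGroup M] [Module R M] where
  P : PresData R M
  S : SyzData R (TrOf R P)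
  Q : PresData R (SyzOf R S)

/-- The cosyzygy `Ω⁻¹ M = Tr Ω Tr M` determined by the data `D`. -/
abbrev CosyzOf {M : Type} [AddCommGroup M] [Module R M] (D : CosyzData R M) : Type :=
  TrOf R D.Q

/-- The map `t : Tr M → Tr M'` represents the transpose `Tr φ` of `φ : M' → M`
(with respect to the chosen minimal presentations). -/
def RepresentsTr {M M' : Type} [AddCommGroup M] [Module R M] [AddCommGroup M'] [Module R M']
    (D : PresData R M) (D' : PresData R M') (φ : M' →ₗ[R] M)
    (t : TrOf R D →ₗ[R] TrOf R D') : Prop :=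
  ∃ (φ0 : (Fin D'.n0 → R) →ₗ[R] (Fin D.n0 → R)) (φ1 : (Fin D'.n1 → R) →ₗ[R] (Fin D.n1 → R)),
    D.p ∘ₗ φ0 = φ ∘ₗ D'.p ∧ D.d ∘ₗ φ1 = φ0 ∘ₗ D'.d ∧
    t ∘ₗ (LinearMap.range D.d.dualMap).mkQ = (LinearMap.range D'.d.dualMap).mkQ ∘ₗ φ1.dualMap

/-- The map `v : Ω Y → Ω Y'` represents the syzygy `Ω ψ` of `ψ : Y → Y'`
(with respect to the chosen minimal covers). -/
def RepresentsOmega {Y Y' : Type} [AddCommGroup Y] [Module R Y] [AddCommGroup Y'] [Module R Y']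
    (D : SyzData R Y) (D' : SyzData R Y') (ψ : Y →ₗ[R] Y')
    (v : SyzOf R D →ₗ[R] SyzOf R D') : Prop :=
  ∃ h : (Fin D.n → R) →ₗ[R] (Fin D'.n → R), D'.p ∘ₗ h = ψ ∘ₗ D.p ∧
    (LinearMap.ker D'.p).subtype ∘ₗ v = h ∘ₗ (LinearMap.ker D.p).subtype

/-- The map `w : Ω⁻¹ X' → Ω⁻¹ X` represents `Ω⁻¹ φ = Tr Ω Tr φ` for `φ : X' → X`. -/
def RepresentsOmegaInv {X X' : Type} [AddCommGroup X] [Module R X] [AddCommGroup X']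
    [Module R X'] (C : CosyzData R X) (C' : CosyzData R X') (φ : X' →ₗ[R] X)
    (w : CosyzOf R C' →ₗ[R] CosyzOf R C) : Prop :=
  ∃ (t : TrOf R C.P →ₗ[R] TrOf R C'.P) (v : SyzOf R C.S →ₗ[R] SyzOf R C'.S),
    RepresentsTr R C.P C'.P φ t ∧ RepresentsOmega R C.S C'.S t v ∧
    RepresentsTr R C'.Q C.Q v w

end Transpose

/-- `M` has injective dimension at most `n` as an `R`-module. -/
def InjDimLE (R : Type) [CommRing R] : ℕ → ModuleCat.{0} R → Prop
  | 0, M => Module.Injective R M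
  | n+1, M => ∃ (I : ModuleCat.{0} R) (f : (M : Type) →ₗ[R] (I : Type)),
      Module.Injective R I ∧ Function.Injective f ∧
      InjDimLE R n (ModuleCat.of R ((I : Type) ⧸ LinearMap.range f))

/-- A Gorenstein local ring: a Noetherian local ring of finite injective dimension as a
module over itself. -/
def IsGorensteinLocal (R : Type) [CommRing R] : Prop :=
  IsNoetherianRing R ∧ IsLocalRing R ∧ ∃ n : ℕ, InjDimLE R n (ModuleCat.of R R)

/-- The length of an `R`-module, expressed as the Krull dimension of its lattice of
submodules. -/
noncomputable def modLength (R M : Type) [CommRing R] [AddCommGroup M] [Module R M] :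
    WithBot ℕ∞ :=
  Order.krullDim (Submodule R M)

/-!
Let `F₁ → F₀ → X → 0` be the presentation of `X`, and `G₁ → G₀ → N → Tr X → 0` the presentation
obtained by splicing the cover of `Tr X` with the presentation of `Ω Tr X`. Both `F₀* → F₁*` and
`G₀ → N` begin a projective resolution of `Tr X`, so they are homotopy equivalent. Dualising, one
gets a map `G₀* → X` through which `G₀* → G₁* → Ω⁻¹ X → 0` behaves, up to stably trivial maps, like
a sequence `X → G₁* → Ω⁻¹ X → 0` in which every map from `X` to a free module extends to `G₁*`.

For a cover `F → Y`, call `f : X → ΩY` and `g : Ω⁻¹ X → Y` related if some map `G₁* → F` is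
compatible with both. Every `f` and every `g` is related to something, and related maps are stably
trivial simultaneously, so the relation is the graph of an isomorphism of stable Hom-modules.
Relatedness is preserved by composition with maps of `X` and `Y`, which gives naturality.
-/

open Module Function

section ProjectiveLifting

variable {R A₀ A₁ B₀ B₁ B₂ T : Type*} [CommRing R]
  [AddCommGroup A₀] [Module R A₀] [Projective R A₀] [AddCommGroup A₁] [Module R A₁]
  [Projective R A₁] [AddCommGroup B₀] [Module R B₀] [AddCommGroup B₁] [Module R B₁]
  [AddCommGroup B₂] [Module R B₂] [AddCommGroup T] [Module R T]

theorem exists_comp_eq_of_exact {q : B₁ →ₗ[R] B₀} {σ : B₀ →ₗ[R] T} (hqσ : Exact q σ)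
    {f : A₀ →ₗ[R] B₀} (hf : σ ∘ₗ f = 0) : ∃ l : A₀ →ₗ[R] B₁, q ∘ₗ l = f := by
  have f_mem_range : ∀ x, f x ∈ LinearMap.range q := fun x =>
    (hqσ (f x)).1 (LinearMap.congr_fun hf x)
  obtain ⟨l, hl⟩ := projective_lifting_property q.rangeRestrict
    (f.codRestrict _ f_mem_range) q.surjective_rangeRestrict
  refine ⟨l, ?_⟩
  rw [← LinearMap.subtype_comp_codRestrict f _ f_mem_range, ← hl]
  rfl

theorem exists_chainMap_lift {d : A₁ →ₗ[R] A₀} {m : A₀ →ₗ[R] T} (hmd : m ∘ₗ d = 0)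
    {q : B₁ →ₗ[R] B₀} {σ : B₀ →ₗ[R] T} (hqσ : Exact q σ) (hσ : Surjective σ) :
    ∃ (a : A₀ →ₗ[R] B₀) (b : A₁ →ₗ[R] B₁), σ ∘ₗ a = m ∧ q ∘ₗ b = a ∘ₗ d := by
  obtain ⟨a, ha⟩ := projective_lifting_property σ m hσ
  obtain ⟨b, hb⟩ := exists_comp_eq_of_exact hqσ (f := a ∘ₗ d) <| by
    rw [← LinearMap.comp_assoc, ha, hmd]
  exact ⟨a, b, ha, hb⟩

theorem exists_homotopy {e : B₂ →ₗ[R] B₁} {q : B₁ →ₗ[R] B₀} {σ : B₀ →ₗ[R] T}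
    (heq : Exact e q) (hqσ : Exact q σ) {d : A₁ →ₗ[R] A₀} {a : A₀ →ₗ[R] B₀} {b : A₁ →ₗ[R] B₁}
    (ha : σ ∘ₗ a = 0) (hb : q ∘ₗ b = a ∘ₗ d) :
    ∃ (s : A₀ →ₗ[R] B₁) (r : A₁ →ₗ[R] B₂), b = s ∘ₗ d + e ∘ₗ r := by
  obtain ⟨s, hs⟩ := exists_comp_eq_of_exact hqσ ha
  obtain ⟨r, hr⟩ := exists_comp_eq_of_exact heq (f := b - s ∘ₗ d) <| by
    rw [LinearMap.comp_sub, hb, ← LinearMap.comp_assoc, hs, sub_self]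
  exact ⟨s, r, by rw [hr, add_sub_cancel]⟩

theorem exists_eq_id_add_homotopy {e : B₂ →ₗ[R] A₁} {d : A₁ →ₗ[R] A₀} {m : A₀ →ₗ[R] T}
    (hed : Exact e d) (hdm : Exact d m) {a : A₀ →ₗ[R] A₀} {b : A₁ →ₗ[R] A₁} (ha : m ∘ₗ a = m)
    (hb : d ∘ₗ b = a ∘ₗ d) :
    ∃ (s : A₀ →ₗ[R] A₁) (r : A₁ →ₗ[R] B₂), b = LinearMap.id + s ∘ₗ d + e ∘ₗ r := by
  obtain ⟨s, r, h⟩ := exists_homotopy hed hdm (a := a - LinearMap.id) (b := b - LinearMap.id)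
    (by rw [LinearMap.comp_sub, ha, LinearMap.comp_id, sub_self])
    (by rw [LinearMap.comp_sub, LinearMap.sub_comp, hb, LinearMap.comp_id, LinearMap.id_comp])
  exact ⟨s, r, by rw [add_assoc, ← h, add_sub_cancel]⟩

theorem exists_homotopy_inverse [Projective R B₀] [Projective R B₁] {A₂ : Type*} [AddCommGroup A₂]
    [Module R A₂] {f : A₂ →ₗ[R] A₁} {d : A₁ →ₗ[R] A₀} {m : A₀ →ₗ[R] T} (hfd : Exact f d)
    (hdm : Exact d m) (hm : Surjective m) {e : B₂ →ₗ[R] B₁} {q : B₁ →ₗ[R] B₀} {σ : B₀ →ₗ[R] T}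
    (heq : Exact e q) (hqσ : Exact q σ) {a : A₀ →ₗ[R] B₀} {b : A₁ →ₗ[R] B₁} (ha : σ ∘ₗ a = m)
    (hb : q ∘ₗ b = a ∘ₗ d) :
    ∃ (a' : B₀ →ₗ[R] A₀) (b' : B₁ →ₗ[R] A₁), d ∘ₗ b' = a' ∘ₗ q ∧
      (∃ (s : B₀ →ₗ[R] B₁) (r : B₁ →ₗ[R] B₂), b ∘ₗ b' = LinearMap.id + s ∘ₗ q + e ∘ₗ r) ∧
      ∃ (s : A₀ →ₗ[R] A₁) (r : A₁ →ₗ[R] A₂), b' ∘ₗ b = LinearMap.id + s ∘ₗ d + f ∘ₗ r := by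
  obtain ⟨a', b', ha', hb'⟩ := exists_chainMap_lift hqσ.linearMap_comp_eq_zero hdm hm
  refine ⟨a', b', hb', exists_eq_id_add_homotopy heq hqσ (a := a ∘ₗ a') ?_ ?_,
    exists_eq_id_add_homotopy hfd hdm (a := a' ∘ₗ a) ?_ ?_⟩
  · rw [← LinearMap.comp_assoc, ha, ha']
  · rw [← LinearMap.comp_assoc, hb, LinearMap.comp_assoc, hb', LinearMap.comp_assoc]
  · rw [← LinearMap.comp_assoc, ha', ha]
  · rw [← LinearMap.comp_assoc, hb', LinearMap.comp_assoc, hb, LinearMap.comp_assoc]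

end ProjectiveLifting

section Predual

variable {R A A' B B' : Type*} [CommRing R] [AddCommGroup A] [Module R A] [IsReflexive R A]
  [AddCommGroup A'] [Module R A'] [IsReflexive R A'] [AddCommGroup B] [Module R B]
  [AddCommGroup B'] [Module R B']

/-- The transpose `B* → A` of a map `A* → B`, where `A` is identified with its bidual. -/
noncomputable def predual : (Dual R A →ₗ[R] B) →ₗ[R] Dual R B →ₗ[R] A :=
  LinearMap.llcomp R _ _ _ (evalEquiv R A).symm.toLinearMap ∘ₗ Dual.transpose

@[simp]
theorem apply_predual (b : Dual R A →ₗ[R] B) (γ : Dual R B) (y : Dual R A) :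
    y (predual b γ) = γ (b y) := by
  simp [predual, Dual.transpose]

theorem eval_comp_predual (b : Dual R A →ₗ[R] B) : Dual.eval R A ∘ₗ predual b = b.dualMap := by
  ext γ y
  exact apply_predual b γ y

theorem predual_id_comp_eval : predual LinearMap.id ∘ₗ Dual.eval R A = LinearMap.id := by
  ext x
  exact (evalEquiv R A).symm_apply_apply x

theorem predual_comp (g : B →ₗ[R] B') (b : Dual R A →ₗ[R] B) :
    predual (g ∘ₗ b) = predual b ∘ₗ g.dualMap :=
  rfl

theorem predual_comp_dualMap (b : Dual R A →ₗ[R] B) (φ : A →ₗ[R] A') :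
    predual (b ∘ₗ φ.dualMap) = φ ∘ₗ predual b := by
  ext γ
  refine (evalEquiv R A').injective (LinearMap.ext fun y => ?_)
  have dual_apply_eq : y (predual (b ∘ₗ φ.dualMap) γ) = (φ.dualMap y) (predual b γ) := by
    rw [apply_predual, apply_predual, LinearMap.comp_apply]
  exact dual_apply_eq

end Predual

section StSub

variable {R : Type} [CommRing R] {M N : Type} [AddCommGroup M] [Module R M] [AddCommGroup N]
  [Module R N]

theorem exists_comp_eq_comp_fin {M N A : Type*} [AddCommGroup M] [Module R M] [AddCommGroup N]
    [Module R N] [AddCommGroup A] [Module R A] [Projective R A] [Module.Finite R A]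
    (g : M →ₗ[R] A) (h : A →ₗ[R] N) :
    ∃ (n : ℕ) (g' : M →ₗ[R] (Fin n → R)) (h' : (Fin n → R) →ₗ[R] N), h ∘ₗ g = h' ∘ₗ g' := by
  obtain ⟨n, retraction, inclusion, -, -, retract⟩ :=
    Module.Finite.exists_comp_eq_id_of_projective R A
  refine ⟨n, inclusion ∘ₗ g, h ∘ₗ retraction, ?_⟩
  rw [LinearMap.comp_assoc, ← LinearMap.comp_assoc g, retract, LinearMap.id_comp]

theorem comp_mem_stSub {A : Type*} [AddCommGroup A] [Module R A] [Projective R A]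
    [Module.Finite R A] (g : M →ₗ[R] A) (h : A →ₗ[R] N) : h ∘ₗ g ∈ stSub R M N :=
  Submodule.subset_span (exists_comp_eq_comp_fin g h)

theorem exists_eq_comp_of_mem_stSub {f : M →ₗ[R] N} (hf : f ∈ stSub R M N) :
    ∃ (n : ℕ) (g : M →ₗ[R] (Fin n → R)) (h : (Fin n → R) →ₗ[R] N), f = h ∘ₗ g := by
  refine Submodule.span_induction (fun _ hx => hx) ⟨0, 0, 0, by simp⟩ ?_ ?_ hf
  · rintro _ _ _ _ ⟨n, g, h, rfl⟩ ⟨n', g', h', rfl⟩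
    rw [← LinearMap.coprod_comp_prod]
    exact exists_comp_eq_comp_fin _ _
  · rintro a _ _ ⟨n, g, h, rfl⟩
    exact ⟨n, g, a • h, (LinearMap.smul_comp a h g).symm⟩

end StSub

theorem exists_quotient_equiv_of_correspondence {R A B : Type*} [CommRing R] [AddCommGroup A]
    [Module R A] [AddCommGroup B] [Module R B] {A' : Submodule R A} {B' : Submodule R B}
    (S : Submodule R (A × B)) (left_total : ∀ a, ∃ b, (a, b) ∈ S)
    (right_total : ∀ b, ∃ a, (a, b) ∈ S) (mem_iff : ∀ a b, (a, b) ∈ S → (a ∈ A' ↔ b ∈ B')) :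
    ∃ E : (A ⧸ A') ≃ₗ[R] (B ⧸ B'), ∀ a b, (a, b) ∈ S → E (A'.mkQ a) = B'.mkQ b := by
  let f : S →ₗ[R] (A ⧸ A') × (B ⧸ B') := A'.mkQ.prodMap B'.mkQ ∘ₗ S.subtype
  have fst_surjective : Surjective (Prod.fst ∘ f) := by
    intro x
    obtain ⟨a, rfl⟩ := A'.mkQ_surjective x
    obtain ⟨b, hab⟩ := left_total a
    exact ⟨⟨(a, b), hab⟩, rfl⟩
  have snd_surjective : Surjective (Prod.snd ∘ f) := by
    intro y
    obtain ⟨b, rfl⟩ := B'.mkQ_surjective y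
    obtain ⟨a, hab⟩ := right_total b
    exact ⟨⟨(a, b), hab⟩, rfl⟩
  obtain ⟨E, hE⟩ := LinearMap.exists_linearEquiv_eq_graph fst_surjective snd_surjective <| by
    rintro ⟨⟨a₁, b₁⟩, h₁⟩ ⟨⟨a₂, b₂⟩, h₂⟩
    exact (Submodule.Quotient.eq A').trans <|
      (mem_iff _ _ (S.sub_mem h₁ h₂)).trans (Submodule.Quotient.eq B').symm
  refine ⟨E, fun a b hab => ?_⟩
  have mk_mem_graph : f ⟨(a, b), hab⟩ ∈ E.toLinearMap.graph := hE ▸ LinearMap.mem_range_self f _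
  exact mk_mem_graph.symm

section Correspondence

variable {R : Type} [CommRing R] {X C Y F : Type} {W P : Type*}
  [AddCommGroup X] [Module R X] [AddCommGroup C] [Module R C] [AddCommGroup Y] [Module R Y]
  [AddCommGroup W] [Module R W] [AddCommGroup P] [Module R P] [AddCommGroup F] [Module R F]
  {u : W →ₗ[R] X} {ε : W →ₗ[R] P} {c : P →ₗ[R] C}

/-- `W --ε--> P --c--> C → 0` exhibits `C` as a stable cosyzygy of `X`, compared with `W` along
`u : W → X`. Functionals pulled back along `u` extend along `ε`, and up to maps that are stably
trivial, or that vanish after `c`, the pair `(X, α)` is a substitute for `(W, ε)`. -/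
structure IsStableCosyzygy (u : W →ₗ[R] X) (ε : W →ₗ[R] P) (c : P →ₗ[R] C) : Prop where
  exact : Exact ε c
  surjective : Surjective c
  exists_dual_extension : ∀ k : Dual R X, ∃ l : Dual R P, l ∘ₗ ε = k ∘ₗ u
  exists_stable_inclusion : ∃ (α : X →ₗ[R] P) (τ : X →ₗ[R] X) (ρ : P →ₗ[R] P),
    τ ∈ stSub R X X ∧ (∀ x, ∃ w, u w = x + τ x ∧ ε w = α x) ∧ c ∘ₗ ρ = c ∧ α ∘ₗ u = ρ ∘ₗ ε

/-- The pairs `(f : X → ker π, g : C → Y)` for which some `l : P → F` makes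
`W → P → C → 0` map to `0 → ker π → F → Y` through `f ∘ u`, `l` and `g`. -/
def syzygyCorrespondence (u : W →ₗ[R] X) (ε : W →ₗ[R] P) (c : P →ₗ[R] C) (π : F →ₗ[R] Y) :
    Submodule R ((X →ₗ[R] LinearMap.ker π) × (C →ₗ[R] Y)) where
  carrier := {fg | ∃ l : P →ₗ[R] F, π ∘ₗ l = fg.2 ∘ₗ c ∧
    l ∘ₗ ε = (LinearMap.ker π).subtype ∘ₗ fg.1 ∘ₗ u}
  add_mem' := by
    rintro _ _ ⟨l, hl, hlε⟩ ⟨l', hl', hlε'⟩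
    refine ⟨l + l', ?_, ?_⟩
    · rw [LinearMap.comp_add, hl, hl', Prod.snd_add, LinearMap.add_comp]
    · rw [LinearMap.add_comp, hlε, hlε', Prod.fst_add, LinearMap.add_comp, LinearMap.comp_add]
  zero_mem' := ⟨0, by simp, by simp⟩
  smul_mem' := by
    rintro a _ ⟨l, hl, hlε⟩
    refine ⟨a • l, ?_, ?_⟩
    · rw [LinearMap.comp_smul, hl, Prod.smul_snd, LinearMap.smul_comp]
    · rw [LinearMap.smul_comp, hlε, Prod.smul_fst, LinearMap.smul_comp, LinearMap.comp_smul]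

theorem postcomp_mem_syzygyCorrespondence {Y' F' : Type} [AddCommGroup Y'] [Module R Y']
    [AddCommGroup F'] [Module R F'] {π : F →ₗ[R] Y} {π' : F' →ₗ[R] Y'} {ψ : Y →ₗ[R] Y'}
    {v : LinearMap.ker π →ₗ[R] LinearMap.ker π'} {k : F →ₗ[R] F'} (hk : π' ∘ₗ k = ψ ∘ₗ π)
    (hv : (LinearMap.ker π').subtype ∘ₗ v = k ∘ₗ (LinearMap.ker π).subtype)
    {f : X →ₗ[R] LinearMap.ker π} {g : C →ₗ[R] Y}
    (hfg : (f, g) ∈ syzygyCorrespondence u ε c π) :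
    (v ∘ₗ f, ψ ∘ₗ g) ∈ syzygyCorrespondence u ε c π' := by
  obtain ⟨l, hl, hlε⟩ := hfg
  refine ⟨k ∘ₗ l, ?_, ?_⟩
  · rw [← LinearMap.comp_assoc, hk, LinearMap.comp_assoc, hl, LinearMap.comp_assoc]
  · rw [LinearMap.comp_assoc, hlε, ← LinearMap.comp_assoc, ← hv, LinearMap.comp_assoc,
      LinearMap.comp_assoc]

theorem precomp_mem_syzygyCorrespondence {X' C' : Type} {W' P' : Type*} [AddCommGroup X']
    [Module R X'] [AddCommGroup C'] [Module R C'] [AddCommGroup W'] [Module R W']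
    [AddCommGroup P'] [Module R P'] {u' : W' →ₗ[R] X'} {ε' : W' →ₗ[R] P'} {c' : P' →ₗ[R] C'}
    {φ : X' →ₗ[R] X} {ω : W' →ₗ[R] W} {v : P' →ₗ[R] P} {w : C' →ₗ[R] C} {s : P' →ₗ[R] X}
    (hu : u ∘ₗ ω = φ ∘ₗ u' + s ∘ₗ ε') (hε : v ∘ₗ ε' = ε ∘ₗ ω) (hc : w ∘ₗ c' = c ∘ₗ v)
    {π : F →ₗ[R] Y} {f : X →ₗ[R] LinearMap.ker π} {g : C →ₗ[R] Y}
    (hfg : (f, g) ∈ syzygyCorrespondence u ε c π) :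
    (f ∘ₗ φ, g ∘ₗ w) ∈ syzygyCorrespondence u' ε' c' π := by
  obtain ⟨l, hl, hlε⟩ := hfg
  refine ⟨l ∘ₗ v - (LinearMap.ker π).subtype ∘ₗ f ∘ₗ s, ?_, ?_⟩
  · rw [LinearMap.comp_sub, ← LinearMap.comp_assoc, hl, ← LinearMap.comp_assoc,
      LinearMap.comp_ker_subtype, LinearMap.zero_comp, sub_zero, LinearMap.comp_assoc, ← hc,
      LinearMap.comp_assoc]
  · calc (l ∘ₗ v - (LinearMap.ker π).subtype ∘ₗ f ∘ₗ s) ∘ₗ ε'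
        = (l ∘ₗ ε) ∘ₗ ω - (LinearMap.ker π).subtype ∘ₗ f ∘ₗ s ∘ₗ ε' := by
          simp only [LinearMap.sub_comp, LinearMap.comp_assoc, hε]
      _ = (LinearMap.ker π).subtype ∘ₗ f ∘ₗ (u ∘ₗ ω - s ∘ₗ ε') := by
          simp only [hlε, LinearMap.comp_assoc, LinearMap.comp_sub]
      _ = (LinearMap.ker π).subtype ∘ₗ (f ∘ₗ φ) ∘ₗ u' := by
          rw [hu, add_sub_cancel_right, LinearMap.comp_assoc]

namespace IsStableCosyzygy

theorem exists_extension [Projective R F] [Module.Finite R F] (h : IsStableCosyzygy u ε c)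
    (f : X →ₗ[R] F) : ∃ l : P →ₗ[R] F, l ∘ₗ ε = f ∘ₗ u := by
  obtain ⟨n, retraction, inclusion, -, -, retract⟩ :=
    Module.Finite.exists_comp_eq_id_of_projective R F
  choose l hl using fun i => h.exists_dual_extension (LinearMap.proj i ∘ₗ inclusion ∘ₗ f)
  have coordinatewise : LinearMap.pi l ∘ₗ ε = inclusion ∘ₗ f ∘ₗ u := by
    ext w i
    exact LinearMap.congr_fun (hl i) w
  refine ⟨retraction ∘ₗ LinearMap.pi l, ?_⟩
  rw [LinearMap.comp_assoc, coordinatewise, ← LinearMap.comp_assoc, retract, LinearMap.id_comp]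

theorem exists_factor (h : IsStableCosyzygy u ε c) {N : Type*} [AddCommGroup N] [Module R N]
    {l : P →ₗ[R] N} (hl : l ∘ₗ ε = 0) : ∃ g : C →ₗ[R] N, g ∘ₗ c = l :=
  (LinearMap.exact_lcomp_of_exact_of_surjective N h.exact h.surjective l).1 hl

variable {π : F →ₗ[R] Y}

theorem exists_right [Projective R F] [Module.Finite R F] (h : IsStableCosyzygy u ε c)
    (f : X →ₗ[R] LinearMap.ker π) : ∃ g, (f, g) ∈ syzygyCorrespondence u ε c π := by
  obtain ⟨l, hl⟩ := h.exists_extension ((LinearMap.ker π).subtype ∘ₗ f)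
  obtain ⟨g, hg⟩ := h.exists_factor (l := π ∘ₗ l) <| by
    rw [LinearMap.comp_assoc, hl, ← LinearMap.comp_assoc, ← LinearMap.comp_assoc,
      LinearMap.comp_ker_subtype, LinearMap.zero_comp, LinearMap.zero_comp]
  exact ⟨g, l, hg.symm, hl⟩

theorem exists_left [Projective R P] (h : IsStableCosyzygy u ε c) (hπ : Surjective π)
    (g : C →ₗ[R] Y) : ∃ f, (f, g) ∈ syzygyCorrespondence u ε c π := by
  obtain ⟨α, τ, ρ, -, hα, hcρ, hαu⟩ := h.exists_stable_inclusion
  obtain ⟨l, hl⟩ := projective_lifting_property π (g ∘ₗ c) hπ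
  have lα_mem_ker : ∀ x, (l ∘ₗ α) x ∈ LinearMap.ker π := by
    intro x
    obtain ⟨w, -, hw⟩ := hα x
    calc π (l (α x)) = g (c (ε w)) := by rw [hw]; exact LinearMap.congr_fun hl (α x)
      _ = 0 := by rw [h.exact.apply_apply_eq_zero, map_zero]
  refine ⟨(l ∘ₗ α).codRestrict _ lα_mem_ker, l ∘ₗ ρ, ?_, ?_⟩
  · rw [← LinearMap.comp_assoc, hl, LinearMap.comp_assoc, hcρ]
  · rw [← LinearMap.comp_assoc, LinearMap.subtype_comp_codRestrict, LinearMap.comp_assoc,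
      LinearMap.comp_assoc, hαu]

theorem mem_stSub_right [Projective R F] [Module.Finite R F] (h : IsStableCosyzygy u ε c)
    {f : X →ₗ[R] LinearMap.ker π} {g : C →ₗ[R] Y} (hfg : (f, g) ∈ syzygyCorrespondence u ε c π)
    (hf : f ∈ stSub R X (LinearMap.ker π)) : g ∈ stSub R C Y := by
  obtain ⟨l, hl, hlε⟩ := hfg
  obtain ⟨n, f₁, f₂, rfl⟩ := exists_eq_comp_of_mem_stSub hf
  obtain ⟨y, hy⟩ := h.exists_extension f₁
  obtain ⟨lift, h_lift⟩ := h.exists_factor (l := l - (LinearMap.ker π).subtype ∘ₗ f₂ ∘ₗ y) <| by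
    rw [LinearMap.sub_comp, hlε, sub_eq_zero, LinearMap.comp_assoc, LinearMap.comp_assoc,
      LinearMap.comp_assoc, hy]
  have g_eq : g = π ∘ₗ lift := by
    rw [← LinearMap.cancel_right h.surjective, LinearMap.comp_assoc, h_lift, LinearMap.comp_sub,
      ← LinearMap.comp_assoc, LinearMap.comp_ker_subtype, LinearMap.zero_comp, sub_zero, hl]
  exact g_eq ▸ comp_mem_stSub lift π

theorem mem_stSub_left [Projective R P] [Module.Finite R P] (h : IsStableCosyzygy u ε c)
    (hπ : Surjective π) {f : X →ₗ[R] LinearMap.ker π} {g : C →ₗ[R] Y}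
    (hfg : (f, g) ∈ syzygyCorrespondence u ε c π) (hg : g ∈ stSub R C Y) :
    f ∈ stSub R X (LinearMap.ker π) := by
  obtain ⟨α, τ, ρ, hτ, hα, -, -⟩ := h.exists_stable_inclusion
  obtain ⟨l, hl, hlε⟩ := hfg
  obtain ⟨n, g₁, g₂, rfl⟩ := exists_eq_comp_of_mem_stSub hg
  obtain ⟨g₂', hg₂'⟩ := projective_lifting_property π g₂ hπ
  have diff_mem_ker : ∀ x, (l - g₂' ∘ₗ g₁ ∘ₗ c) x ∈ LinearMap.ker π := by
    refine LinearMap.congr_fun (f := π ∘ₗ (l - g₂' ∘ₗ g₁ ∘ₗ c)) (g := 0) ?_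
    rw [LinearMap.comp_sub, hl, ← LinearMap.comp_assoc, hg₂', LinearMap.comp_assoc, sub_self]
  let δ : P →ₗ[R] LinearMap.ker π := (l - g₂' ∘ₗ g₁ ∘ₗ c).codRestrict _ diff_mem_ker
  have f_eq : f = δ ∘ₗ α - f ∘ₗ τ := by
    ext1 x
    obtain ⟨w, huw, hεw⟩ := hα x
    have δ_apply : δ (α x) = f (x + τ x) := by
      apply Subtype.ext
      calc l (α x) - g₂' (g₁ (c (α x))) = l (ε w) := by
            rw [← hεw, h.exact.apply_apply_eq_zero, map_zero, map_zero, sub_zero]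
        _ = f (u w) := LinearMap.congr_fun hlε w
        _ = f (x + τ x) := by rw [huw]
    rw [LinearMap.sub_apply, LinearMap.comp_apply, δ_apply, map_add, LinearMap.comp_apply,
      add_sub_cancel_right]
  obtain ⟨k, τ₁, τ₂, rfl⟩ := exists_eq_comp_of_mem_stSub hτ
  exact f_eq ▸ Submodule.sub_mem _ (comp_mem_stSub α δ) (comp_mem_stSub τ₁ (f ∘ₗ τ₂))

theorem exists_stHom_equiv [Projective R P] [Module.Finite R P] [Projective R F]
    [Module.Finite R F] (h : IsStableCosyzygy u ε c) (hπ : Surjective π) :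
    ∃ E : StHom R X (LinearMap.ker π) ≃ₗ[R] StHom R C Y,
      ∀ f g, (f, g) ∈ syzygyCorrespondence u ε c π →
        E ((stSub R _ _).mkQ f) = (stSub R _ _).mkQ g :=
  exists_quotient_equiv_of_correspondence _ h.exists_right (h.exists_left hπ)
    fun _ _ hfg => ⟨h.mem_stSub_right hfg, h.mem_stSub_left hπ hfg⟩

/-- The isomorphism of stable Hom-modules whose graph is induced by `syzygyCorrespondence`. -/
noncomputable def stHomEquiv [Projective R P] [Module.Finite R P] [Projective R F]
    [Module.Finite R F] (h : IsStableCosyzygy u ε c) (hπ : Surjective π) :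
    StHom R X (LinearMap.ker π) ≃ₗ[R] StHom R C Y :=
  (h.exists_stHom_equiv hπ).choose

theorem stHomEquiv_mkQ [Projective R P] [Module.Finite R P] [Projective R F]
    [Module.Finite R F] (h : IsStableCosyzygy u ε c) (hπ : Surjective π)
    {f : X →ₗ[R] LinearMap.ker π} {g : C →ₗ[R] Y} (hfg : (f, g) ∈ syzygyCorrespondence u ε c π) :
    h.stHomEquiv hπ ((stSub R _ _).mkQ f) = (stSub R _ _).mkQ g :=
  (h.exists_stHom_equiv hπ).choose_spec f g hfg

theorem stHomEquiv_comp_stMapLeft [Projective R P] [Module.Finite R P] [Projective R F]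
    [Module.Finite R F] {Y' F' : Type} [AddCommGroup Y'] [Module R Y'] [AddCommGroup F']
    [Module R F'] [Projective R F'] [Module.Finite R F'] (h : IsStableCosyzygy u ε c)
    (hπ : Surjective π) {π' : F' →ₗ[R] Y'} (hπ' : Surjective π') {ψ : Y →ₗ[R] Y'}
    {v : LinearMap.ker π →ₗ[R] LinearMap.ker π'} {k : F →ₗ[R] F'} (hk : π' ∘ₗ k = ψ ∘ₗ π)
    (hv : (LinearMap.ker π').subtype ∘ₗ v = k ∘ₗ (LinearMap.ker π).subtype) :
    (h.stHomEquiv hπ').toLinearMap ∘ₗ stMapLeft R v =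
      stMapLeft R ψ ∘ₗ (h.stHomEquiv hπ).toLinearMap := by
  refine Submodule.linearMap_qext _ (LinearMap.ext fun f => ?_)
  obtain ⟨g, hfg⟩ := h.exists_right f
  calc h.stHomEquiv hπ' ((stSub R _ _).mkQ (v ∘ₗ f))
      = (stSub R _ _).mkQ (ψ ∘ₗ g) :=
        h.stHomEquiv_mkQ hπ' (postcomp_mem_syzygyCorrespondence hk hv hfg)
    _ = stMapLeft R ψ (h.stHomEquiv hπ ((stSub R _ _).mkQ f)) := by
        rw [h.stHomEquiv_mkQ hπ hfg]; rfl

theorem stHomEquiv_comp_stMapRight [Projective R P] [Module.Finite R P] [Projective R F]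
    [Module.Finite R F] {X' C' : Type} {W' P' : Type*} [AddCommGroup X'] [Module R X']
    [AddCommGroup C'] [Module R C'] [AddCommGroup W'] [Module R W'] [AddCommGroup P']
    [Module R P'] [Projective R P'] [Module.Finite R P'] {u' : W' →ₗ[R] X'} {ε' : W' →ₗ[R] P'}
    {c' : P' →ₗ[R] C'} (h : IsStableCosyzygy u ε c) (h' : IsStableCosyzygy u' ε' c')
    (hπ : Surjective π) {φ : X' →ₗ[R] X} {ω : W' →ₗ[R] W} {v : P' →ₗ[R] P} {w : C' →ₗ[R] C}
    {s : P' →ₗ[R] X} (hu : u ∘ₗ ω = φ ∘ₗ u' + s ∘ₗ ε') (hε : v ∘ₗ ε' = ε ∘ₗ ω)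
    (hc : w ∘ₗ c' = c ∘ₗ v) :
    (h'.stHomEquiv hπ).toLinearMap ∘ₗ stMapRight R φ =
      stMapRight R w ∘ₗ (h.stHomEquiv hπ).toLinearMap := by
  refine Submodule.linearMap_qext _ (LinearMap.ext fun f => ?_)
  obtain ⟨g, hfg⟩ := h.exists_right f
  calc h'.stHomEquiv hπ ((stSub R _ _).mkQ (f ∘ₗ φ))
      = (stSub R _ _).mkQ (g ∘ₗ w) :=
        h'.stHomEquiv_mkQ hπ (precomp_mem_syzygyCorrespondence hu hε hc hfg)
    _ = stMapRight R w (h.stHomEquiv hπ ((stSub R _ _).mkQ f)) := by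
        rw [h.stHomEquiv_mkQ hπ hfg]; rfl

end IsStableCosyzygy

end Correspondence

section HomotopyEquivalence

variable {R : Type} [CommRing R] {X C : Type} {F₁ F₀ N G₁ G₀ T : Type*}
  [AddCommGroup X] [Module R X] [AddCommGroup C] [Module R C]
  [AddCommGroup F₁] [Module R F₁] [AddCommGroup F₀] [Module R F₀] [AddCommGroup N] [Module R N]
  [AddCommGroup G₁] [Module R G₁] [AddCommGroup G₀] [Module R G₀] [AddCommGroup T] [Module R T]
  {d : F₁ →ₗ[R] F₀} {p : F₀ →ₗ[R] X} {e : G₁ →ₗ[R] G₀} {q : G₀ →ₗ[R] N}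
  {a : Dual R F₁ →ₗ[R] N} {b : Dual R F₀ →ₗ[R] G₀}
  {a' : N →ₗ[R] Dual R F₁} {b' : G₀ →ₗ[R] Dual R F₀}

theorem exists_dual_extension_of_chainMap [IsReflexive R F₀] (hdp : Exact d p) (heq : Exact e q)
    (hb : q ∘ₗ b = a ∘ₗ d.dualMap) (k : Dual R X) :
    ∃ l : Dual R (Dual R G₁), l ∘ₗ e.dualMap = k ∘ₗ p ∘ₗ predual b := by
  have dp_zero : d.dualMap (p.dualMap k) = 0 := by
    ext x
    simp [hdp.apply_apply_eq_zero]
  obtain ⟨y, hy⟩ := (heq (b (p.dualMap k))).1 <| by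
    rw [← LinearMap.comp_apply, hb, LinearMap.comp_apply, dp_zero, map_zero]
  refine ⟨Dual.eval R G₁ y, ?_⟩
  ext γ
  calc γ (e y) = γ (b (p.dualMap k)) := by rw [hy]
    _ = k (p (predual b γ)) := (apply_predual b γ (p.dualMap k)).symm

theorem exists_comp_eq_dualMap_comp_eval (hp : Surjective p) (hdp : Exact d p) (heq : Exact e q)
    (hb' : d.dualMap ∘ₗ b' = a' ∘ₗ q) :
    ∃ α : X →ₗ[R] Dual R G₁, α ∘ₗ p = e.dualMap ∘ₗ b'.dualMap ∘ₗ Dual.eval R F₀ := by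
  refine (LinearMap.exact_lcomp_of_exact_of_surjective _ hdp hp _).1 ?_
  have db'e_zero : d.dualMap ∘ₗ b' ∘ₗ e = 0 := by
    rw [← LinearMap.comp_assoc, hb', LinearMap.comp_assoc, heq.linearMap_comp_eq_zero,
      LinearMap.comp_zero]
  ext x y
  exact LinearMap.congr_fun (LinearMap.congr_fun db'e_zero y) x

theorem comp_predual_comp_eval_of_homotopy [IsReflexive R F₀] [IsReflexive R F₁]
    (hdp : Exact d p) {s : Dual R F₁ →ₗ[R] Dual R F₀} {r : Dual R F₀ →ₗ[R] Dual R X}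
    (hb'b : b' ∘ₗ b = LinearMap.id + s ∘ₗ d.dualMap + p.dualMap ∘ₗ r) :
    p ∘ₗ predual b ∘ₗ b'.dualMap ∘ₗ Dual.eval R F₀ =
      p + p ∘ₗ predual r ∘ₗ Dual.eval R X ∘ₗ p := by
  have pd_zero : p ∘ₗ d = 0 := hdp.linearMap_comp_eq_zero
  calc p ∘ₗ predual b ∘ₗ b'.dualMap ∘ₗ Dual.eval R F₀
      = p ∘ₗ predual (b' ∘ₗ b) ∘ₗ Dual.eval R F₀ := rfl
    _ = p ∘ₗ (predual LinearMap.id + d ∘ₗ predual s + predual r ∘ₗ p.dualMap.dualMap) ∘ₗ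
          Dual.eval R F₀ := by
        rw [hb'b, map_add, map_add, predual_comp_dualMap, predual_comp]
    _ = p ∘ₗ predual LinearMap.id ∘ₗ Dual.eval R F₀ + (p ∘ₗ d) ∘ₗ predual s ∘ₗ Dual.eval R F₀ +
          p ∘ₗ predual r ∘ₗ p.dualMap.dualMap ∘ₗ Dual.eval R F₀ := by
        simp only [LinearMap.add_comp, LinearMap.comp_add, LinearMap.comp_assoc]
    _ = p + p ∘ₗ predual r ∘ₗ Dual.eval R X ∘ₗ p := by
        rw [predual_id_comp_eval, LinearMap.comp_id, pd_zero, LinearMap.zero_comp, add_zero,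
          Dual.eval_naturality]

theorem dualMap_comp_dualMap_of_homotopy (heq : Exact e q) {t : G₀ →ₗ[R] G₀} {s : N →ₗ[R] G₀}
    {r : G₀ →ₗ[R] G₁} (ht : t = LinearMap.id + s ∘ₗ q + e ∘ₗ r) :
    e.dualMap ∘ₗ t.dualMap = (LinearMap.id + e.dualMap ∘ₗ r.dualMap) ∘ₗ e.dualMap := by
  have te_eq : t ∘ₗ e = e + e ∘ₗ r ∘ₗ e := by
    rw [ht, LinearMap.add_comp, LinearMap.add_comp, LinearMap.comp_assoc,
      heq.linearMap_comp_eq_zero, LinearMap.comp_zero, add_zero, LinearMap.id_comp,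
      LinearMap.comp_assoc]
  calc e.dualMap ∘ₗ t.dualMap = (t ∘ₗ e).dualMap := rfl
    _ = e.dualMap + (e ∘ₗ r ∘ₗ e).dualMap := by rw [te_eq]; exact map_add Dual.transpose _ _
    _ = (LinearMap.id + e.dualMap ∘ₗ r.dualMap) ∘ₗ e.dualMap := rfl

theorem isStableCosyzygy_of_homotopyEquiv [IsReflexive R F₁] [Projective R F₀]
    [Module.Finite R F₀] (hp : Surjective p) (hdp : Exact d p) (heq : Exact e q)
    {c : Dual R G₁ →ₗ[R] C} (hc : Surjective c) (hec : Exact e.dualMap c)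
    (hb : q ∘ₗ b = a ∘ₗ d.dualMap) (hb' : d.dualMap ∘ₗ b' = a' ∘ₗ q)
    {s : N →ₗ[R] G₀} {r : G₀ →ₗ[R] G₁} (hbb' : b ∘ₗ b' = LinearMap.id + s ∘ₗ q + e ∘ₗ r)
    {s' : Dual R F₁ →ₗ[R] Dual R F₀} {r' : Dual R F₀ →ₗ[R] Dual R X}
    (hb'b : b' ∘ₗ b = LinearMap.id + s' ∘ₗ d.dualMap + p.dualMap ∘ₗ r') :
    IsStableCosyzygy (p ∘ₗ predual b) e.dualMap c where
  exact := hec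
  surjective := hc
  exists_dual_extension := exists_dual_extension_of_chainMap hdp heq hb
  exists_stable_inclusion := by
    obtain ⟨α, hα⟩ := exists_comp_eq_dualMap_comp_eval hp hdp heq hb'
    refine ⟨α, p ∘ₗ predual r' ∘ₗ Dual.eval R X, LinearMap.id + e.dualMap ∘ₗ r.dualMap,
      comp_mem_stSub _ p, ?_, ?_, ?_⟩
    · intro x
      obtain ⟨z, rfl⟩ := hp x
      exact ⟨b'.dualMap (Dual.eval R F₀ z),
        LinearMap.congr_fun (comp_predual_comp_eval_of_homotopy hdp hb'b) z,
        (LinearMap.congr_fun hα z).symm⟩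
    · rw [LinearMap.comp_add, LinearMap.comp_id, ← LinearMap.comp_assoc,
        hec.linearMap_comp_eq_zero, LinearMap.zero_comp, add_zero]
    · rw [← LinearMap.comp_assoc, hα, LinearMap.comp_assoc, LinearMap.comp_assoc,
        eval_comp_predual, ← dualMap_comp_dualMap_of_homotopy heq hbb',
        LinearMap.dualMap_comp_dualMap]

theorem isStableCosyzygy_of_chainMap [Projective R F₁] [Module.Finite R F₁] [Projective R F₀]
    [Module.Finite R F₀] [Projective R N] [Projective R G₀] (hp : Surjective p)
    (hdp : Exact d p) {m : Dual R F₁ →ₗ[R] T} (hdm : Exact d.dualMap m) (hm : Surjective m)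
    (heq : Exact e q) {σ : N →ₗ[R] T} (hqσ : Exact q σ) {c : Dual R G₁ →ₗ[R] C}
    (hc : Surjective c) (hec : Exact e.dualMap c) (ha : σ ∘ₗ a = m)
    (hb : q ∘ₗ b = a ∘ₗ d.dualMap) : IsStableCosyzygy (p ∘ₗ predual b) e.dualMap c := by
  have dual_exact : Exact p.dualMap d.dualMap :=
    LinearMap.exact_lcomp_of_exact_of_surjective R hdp hp
  obtain ⟨a', b', hb', ⟨s, r, hbb'⟩, s', r', hb'b⟩ :=
    exists_homotopy_inverse dual_exact hdm hm heq hqσ ha hb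
  exact isStableCosyzygy_of_homotopyEquiv hp hdp heq hc hec hb hb' hbb' hb'b

theorem exists_comp_predual_comp_dualMap_eq [Projective R F₁] [Module.Finite R F₁]
    [Projective R F₀] [Module.Finite R F₀] {X' F₁' F₀' N' G₁' G₀' : Type*} [AddCommGroup X']
    [Module R X'] [AddCommGroup F₁'] [Module R F₁'] [AddCommGroup F₀'] [Module R F₀']
    [IsReflexive R F₀'] [AddCommGroup N'] [Module R N'] [AddCommGroup G₁'] [Module R G₁']
    [AddCommGroup G₀'] [Module R G₀'] {d' : F₁' →ₗ[R] F₀'} {p' : F₀' →ₗ[R] X'}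
    {e' : G₁' →ₗ[R] G₀'} {q' : G₀' →ₗ[R] N'} {σ' : N' →ₗ[R] T} {a' : Dual R F₁' →ₗ[R] N'}
    {b' : Dual R F₀' →ₗ[R] G₀'} (hpd : p ∘ₗ d = 0) (heq' : Exact e' q') (hqσ' : Exact q' σ')
    (hb : q ∘ₗ b = a ∘ₗ d.dualMap) (hb' : q' ∘ₗ b' = a' ∘ₗ d'.dualMap) {φ : X' →ₗ[R] X}
    {φ₀ : F₀' →ₗ[R] F₀} {φ₁ : F₁' →ₗ[R] F₁} (hφ₀ : p ∘ₗ φ₀ = φ ∘ₗ p')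
    (hφ₁ : d ∘ₗ φ₁ = φ₀ ∘ₗ d') {k : N →ₗ[R] N'} {v : G₀ →ₗ[R] G₀'} (hv : q' ∘ₗ v = k ∘ₗ q)
    (hk : σ' ∘ₗ k ∘ₗ a = σ' ∘ₗ a' ∘ₗ φ₁.dualMap) :
    ∃ s : Dual R G₁' →ₗ[R] X,
      (p ∘ₗ predual b) ∘ₗ v.dualMap = φ ∘ₗ p' ∘ₗ predual b' + s ∘ₗ e'.dualMap := by
  have dual_hφ₁ : φ₁.dualMap ∘ₗ d.dualMap = d'.dualMap ∘ₗ φ₀.dualMap :=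
    congrArg LinearMap.dualMap hφ₁
  obtain ⟨s, r, hsr⟩ := exists_homotopy heq' hqσ' (d := d.dualMap)
    (a := k ∘ₗ a - a' ∘ₗ φ₁.dualMap) (b := v ∘ₗ b - b' ∘ₗ φ₀.dualMap)
    (by rw [LinearMap.comp_sub, hk, sub_self])
    (by rw [LinearMap.comp_sub, LinearMap.sub_comp, ← LinearMap.comp_assoc, hv,
      LinearMap.comp_assoc, hb, ← LinearMap.comp_assoc _ b', hb', LinearMap.comp_assoc,
      LinearMap.comp_assoc, LinearMap.comp_assoc, dual_hφ₁])
  refine ⟨p ∘ₗ predual r, ?_⟩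
  calc (p ∘ₗ predual b) ∘ₗ v.dualMap = p ∘ₗ predual (v ∘ₗ b) := rfl
    _ = p ∘ₗ predual (b' ∘ₗ φ₀.dualMap + (s ∘ₗ d.dualMap + e' ∘ₗ r)) := by
        rw [← hsr, add_sub_cancel]
    _ = p ∘ₗ (φ₀ ∘ₗ predual b' + (d ∘ₗ predual s + predual r ∘ₗ e'.dualMap)) := by
        rw [map_add, map_add, predual_comp_dualMap, predual_comp_dualMap, predual_comp]
    _ = (p ∘ₗ φ₀) ∘ₗ predual b' + ((p ∘ₗ d) ∘ₗ predual s + (p ∘ₗ predual r) ∘ₗ e'.dualMap) := by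
        simp only [LinearMap.comp_add, LinearMap.comp_assoc]
    _ = φ ∘ₗ p' ∘ₗ predual b' + (p ∘ₗ predual r) ∘ₗ e'.dualMap := by
        rw [hφ₀, hpd, LinearMap.zero_comp, zero_add, LinearMap.comp_assoc]

end HomotopyEquivalence

namespace CosyzData

variable {R : Type} [CommRing R] {X X' : Type} [AddCommGroup X] [Module R X] [AddCommGroup X']
  [Module R X'] (C : CosyzData R X)

/-- The map in the middle of the presentation `G₁ → G₀ → N → Tr X → 0` that splices the
presentation of `Ω Tr X` with the cover of `Tr X`. -/
def splice : (Fin C.Q.n0 → R) →ₗ[R] (Fin C.S.n → R) :=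
  (LinearMap.ker C.S.p).subtype ∘ₗ C.Q.p

theorem exact_splice_cover : Exact C.splice C.S.p := by
  rw [LinearMap.exact_iff, splice, LinearMap.range_comp, LinearMap.range_eq_top.2 C.Q.surj,
    Submodule.map_top, Submodule.range_subtype]

theorem exact_relations_splice : Exact C.Q.d C.splice := by
  rw [LinearMap.exact_iff, splice, LinearMap.ker_comp_of_ker_eq_bot _ (Submodule.ker_subtype _),
    C.Q.exact]

theorem exact_presentation : Exact C.P.d C.P.p :=
  LinearMap.exact_iff.2 C.P.exact.symm

theorem exists_comparison : ∃ (a : Dual R (Fin C.P.n1 → R) →ₗ[R] (Fin C.S.n → R))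
    (b : Dual R (Fin C.P.n0 → R) →ₗ[R] (Fin C.Q.n0 → R)),
    C.S.p ∘ₗ a = (LinearMap.range C.P.d.dualMap).mkQ ∧ C.splice ∘ₗ b = a ∘ₗ C.P.d.dualMap :=
  exists_chainMap_lift (LinearMap.range_mkQ_comp C.P.d.dualMap) C.exact_splice_cover C.S.surj

/-- The degree-zero part `F₁* → N` of a chosen chain map over `Tr X` from `F₀* → F₁* → Tr X` to
`G₀ → N → Tr X`. -/
noncomputable def comparison₀ : Dual R (Fin C.P.n1 → R) →ₗ[R] (Fin C.S.n → R) :=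
  C.exists_comparison.choose

/-- The degree-one part `F₀* → G₀` of the chain map with degree-zero part `comparison₀`. -/
noncomputable def comparison₁ : Dual R (Fin C.P.n0 → R) →ₗ[R] (Fin C.Q.n0 → R) :=
  C.exists_comparison.choose_spec.choose

theorem cover_comp_comparison₀ : C.S.p ∘ₗ C.comparison₀ = (LinearMap.range C.P.d.dualMap).mkQ :=
  C.exists_comparison.choose_spec.choose_spec.1

theorem splice_comp_comparison₁ : C.splice ∘ₗ C.comparison₁ = C.comparison₀ ∘ₗ C.P.d.dualMap :=
  C.exists_comparison.choose_spec.choose_spec.2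

/-- The map `G₀* → X` along which `G₀* → G₁* → Ω⁻¹ X` is a stable cosyzygy of `X`. -/
noncomputable def fromDual : Dual R (Fin C.Q.n0 → R) →ₗ[R] X :=
  C.P.p ∘ₗ predual C.comparison₁

theorem isStableCosyzygy :
    IsStableCosyzygy C.fromDual C.Q.d.dualMap (LinearMap.range C.Q.d.dualMap).mkQ :=
  isStableCosyzygy_of_chainMap C.P.surj C.exact_presentation (LinearMap.exact_map_mkQ_range _)
    (Submodule.mkQ_surjective _) C.exact_relations_splice C.exact_splice_cover
    (Submodule.mkQ_surjective _) (LinearMap.exact_map_mkQ_range _) C.cover_comp_comparison₀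
    C.splice_comp_comparison₁

theorem exists_fromDual_comp_dualMap_eq {C : CosyzData R X} {C' : CosyzData R X'}
    {φ : X' →ₗ[R] X} {t : TrOf R C.P →ₗ[R] TrOf R C'.P} {v : SyzOf R C.S →ₗ[R] SyzOf R C'.S}
    (ht : RepresentsTr R C.P C'.P φ t) (hv : RepresentsOmega R C.S C'.S t v)
    {v₀ : (Fin C.Q.n0 → R) →ₗ[R] (Fin C'.Q.n0 → R)} (hv₀ : C'.Q.p ∘ₗ v₀ = v ∘ₗ C.Q.p) :
    ∃ s : Dual R (Fin C'.Q.n1 → R) →ₗ[R] X,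
      C.fromDual ∘ₗ v₀.dualMap = φ ∘ₗ C'.fromDual + s ∘ₗ C'.Q.d.dualMap := by
  obtain ⟨φ₀, φ₁, hφ₀, hφ₁, ht⟩ := ht
  obtain ⟨k, hkt, hkv⟩ := hv
  have splice_comp : C'.splice ∘ₗ v₀ = k ∘ₗ C.splice := LinearMap.ext fun x =>
    (congrArg Subtype.val (LinearMap.congr_fun hv₀ x)).trans (LinearMap.congr_fun hkv (C.Q.p x))
  have cover_comp :
      C'.S.p ∘ₗ k ∘ₗ C.comparison₀ = C'.S.p ∘ₗ C'.comparison₀ ∘ₗ φ₁.dualMap := by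
    rw [← LinearMap.comp_assoc, hkt, LinearMap.comp_assoc, cover_comp_comparison₀, ht,
      ← cover_comp_comparison₀, LinearMap.comp_assoc]
  exact exists_comp_predual_comp_dualMap_eq C.exact_presentation.linearMap_comp_eq_zero
    C'.exact_relations_splice C'.exact_splice_cover C.splice_comp_comparison₁
    C'.splice_comp_comparison₁ hφ₀ hφ₁ splice_comp cover_comp

end CosyzData

section Adjunction

variable (R : Type) [CommRing R]

/-- Families of isomorphisms `stHom(X, ΩY) ≅ stHom(Ω⁻¹X, Y)`, one for every pair of modules and
every choice of the data defining `ΩY` and `Ω⁻¹X`. -/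
abbrev StHomSyzygyEquivFamily : Type 1 :=
  ∀ (X Y : ModuleCat.{0} R) (CX : CosyzData R (X : Type)) (DY : SyzData R (Y : Type)),
    StHom R (X : Type) (SyzOf R DY) ≃ₗ[R] StHom R (CosyzOf R CX) (Y : Type)

variable {R}

namespace StHomSyzygyEquivFamily

/-- Naturality in `Y`, with respect to every representative `v` of `Ωψ`. -/
def IsNaturalRight (E : StHomSyzygyEquivFamily R) : Prop :=
  ∀ (X Y Y' : ModuleCat.{0} R) (CX : CosyzData R (X : Type)) (DY : SyzData R (Y : Type))
    (DY' : SyzData R (Y' : Type)) (ψ : (Y : Type) →ₗ[R] (Y' : Type))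
    (v : SyzOf R DY →ₗ[R] SyzOf R DY'), RepresentsOmega R DY DY' ψ v →
      (E X Y' CX DY').toLinearMap ∘ₗ stMapLeft R (M := (X : Type)) v =
        stMapLeft R (M := CosyzOf R CX) ψ ∘ₗ (E X Y CX DY).toLinearMap

/-- Naturality in `X`, with respect to every representative `w` of `Ω⁻¹φ`. -/
def IsNaturalLeft (E : StHomSyzygyEquivFamily R) : Prop :=
  ∀ (X X' Y : ModuleCat.{0} R) (CX : CosyzData R (X : Type)) (CX' : CosyzData R (X' : Type))
    (DY : SyzData R (Y : Type)) (φ : (X' : Type) →ₗ[R] (X : Type))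
    (w : CosyzOf R CX' →ₗ[R] CosyzOf R CX), RepresentsOmegaInv R CX CX' φ w →
      (E X' Y CX' DY).toLinearMap ∘ₗ stMapRight R (N := SyzOf R DY) φ =
        stMapRight R (N := (Y : Type)) w ∘ₗ (E X Y CX DY).toLinearMap

end StHomSyzygyEquivFamily

/-- The isomorphisms `stHom(X, ΩY) ≅ stHom(Ω⁻¹X, Y)` obtained from the stable cosyzygy
structure of `Tr Ω Tr X`. -/
noncomputable def stHomSyzygyEquiv : StHomSyzygyEquivFamily R :=
  fun _ _ CX DY => CX.isStableCosyzygy.stHomEquiv DY.surj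

theorem stHomSyzygyEquiv_isNaturalRight : (stHomSyzygyEquiv (R := R)).IsNaturalRight := by
  rintro X Y Y' CX DY DY' ψ v ⟨k, hk, hkv⟩
  exact CX.isStableCosyzygy.stHomEquiv_comp_stMapLeft DY.surj DY'.surj hk hkv

theorem stHomSyzygyEquiv_isNaturalLeft : (stHomSyzygyEquiv (R := R)).IsNaturalLeft := by
  rintro X X' Y CX CX' DY φ w ⟨t, v, ht, hv, v₀, v₁, hv₀, hv₁, hwv⟩
  have fromDual_natural := CosyzData.exists_fromDual_comp_dualMap_eq ht hv hv₀
  obtain ⟨s, hs⟩ := fromDual_natural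
  have dual_hv₁ : v₁.dualMap ∘ₗ CX'.Q.d.dualMap = CX.Q.d.dualMap ∘ₗ v₀.dualMap :=
    congrArg LinearMap.dualMap hv₁
  exact CX.isStableCosyzygy.stHomEquiv_comp_stMapRight CX'.isStableCosyzygy DY.surj hs dual_hv₁ hwv

end Adjunction

theorem stHom_syzygy_adjunction_general (R : Type) [CommRing R] :
    ∃ E : StHomSyzygyEquivFamily R, E.IsNaturalRight ∧ E.IsNaturalLeft :=
  ⟨stHomSyzygyEquiv, stHomSyzygyEquiv_isNaturalRight, stHomSyzygyEquiv_isNaturalLeft⟩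

set_option synthInstance.maxHeartbeats 1000000 in
set_option maxHeartbeats 1000000 in
/-- Lemma 2.3. Over a Noetherian local ring there is an isomorphism
`stHom_R(X, ΩY) ≅ stHom_R(Ω⁻¹X, Y)`, natural in `X` and `Y`: one can choose the isomorphisms
`E X Y` (for all finitely generated `X`, `Y`, and for all choices of the data defining
`ΩY` and `Ω⁻¹X = Tr Ω Tr X`) so that they commute with the maps induced by any `ψ : Y → Y'`
(together with any representative `v` of `Ω ψ`) and by any `φ : X' → X` (together with any
representative `w` of `Ω⁻¹ φ`). -/
theorem stHom_syzygy_adjunction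
    (R : Type) [CommRing R] [IsNoetherianRing R] [IsLocalRing R] :
    ∃ E : ∀ (X Y : ModuleCat.{0} R), Module.Finite R X → Module.Finite R Y →
      (CX : CosyzData R (X : Type)) → (DY : SyzData R (Y : Type)) →
      (StHom R (X : Type) (SyzOf R DY) ≃ₗ[R] StHom R (CosyzOf R CX) (Y : Type)),
      (∀ (X Y Y' : ModuleCat.{0} R) (hX : Module.Finite R X) (hY : Module.Finite R Y)
        (hY' : Module.Finite R Y') (CX : CosyzData R (X : Type))
        (DY : SyzData R (Y : Type)) (DY' : SyzData R (Y' : Type))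
        (ψ : (Y : Type) →ₗ[R] (Y' : Type)) (v : SyzOf R DY →ₗ[R] SyzOf R DY'),
        RepresentsOmega R DY DY' ψ v →
          (E X Y' hX hY' CX DY').toLinearMap ∘ₗ stMapLeft R (M := (X : Type)) v =
            stMapLeft R (M := CosyzOf R CX) ψ ∘ₗ (E X Y hX hY CX DY).toLinearMap) ∧
      (∀ (X X' Y : ModuleCat.{0} R) (hX : Module.Finite R X) (hX' : Module.Finite R X')
        (hY : Module.Finite R Y) (CX : CosyzData R (X : Type))
        (CX' : CosyzData R (X' : Type)) (DY : SyzData R (Y : Type))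
        (φ : (X' : Type) →ₗ[R] (X : Type)) (w : CosyzOf R CX' →ₗ[R] CosyzOf R CX),
        RepresentsOmegaInv R CX CX' φ w →
          (E X' Y hX' hY CX' DY).toLinearMap ∘ₗ stMapRight R (N := SyzOf R DY) φ =
            stMapRight R (N := (Y : Type)) w ∘ₗ (E X Y hX hY CX DY).toLinearMap) := by
  have general := stHom_syzygy_adjunction_general R
  obtain ⟨E, natural_Y, natural_X⟩ := general
  exact ⟨fun X Y _ _ => E X Y, fun X Y Y' _ _ _ => natural_Y X Y Y',
    fun X X' Y _ _ _ => natural_X X X' Y⟩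

end Paper
end

section
/- Let (R, m, k) be a Cohen–Macaulay local ring with an isolated singularity and let M be a finitely generated R-module belonging to ΩCM(R). Then Ω^{-1}M is a Cohen–Macaulay R-module, and M is isomorphic to Ω Ω^{-1} M up to free direct summands, i.e., M ⊕ R^a ≅ Ω Ω^{-1} M ⊕ R^b for some non-negative integers a, b. -/
/-!
Common definitions: Cohen-Macaulay modules, isolated singularities, stable Hom,
syzygies, transposes, Auslander-Reiten sequences, and the Grothendieck-type groups
`G(CM(R))`, `Ex(CM(R))`, `AR(CM(R))` from the paper
"Syzygies of Cohen-Macaulay modules and Grothendieck groups".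

Throughout, the maximal ideal of a local ring is realized as the Jacobson radical
`(⊥ : Ideal R).jacobson` (for a local ring these coincide), which lets the definitions
make sense without a `IsLocalRing` instance argument.
-/

namespace Paper

/-!
Write `E₁ → E₀ → M → 0` for a presentation and `H₁ → H₀ → G → Tr M → 0` for the start of a
resolution of the transpose, so that `Ω⁻¹M` is `H₁* ⧸ X` with `X` the image of `H₀* → H₁*`.

As a syzygy, `M` is torsionless, so dualizing the presentation of `Tr M` twice recovers `M`; by
Schanuel's lemma the choice of resolution only matters up to free summands, hence `X` is stably
isomorphic to `M`. Thus `X` is the syzygy of `Ω⁻¹M` and, up to free summands, that of a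
Cohen–Macaulay module `N` with free cover `F → N`.

The syzygy of `Tr M` being torsionless as well, every functional on `X` extends to `H₁*`. Therefore
the embedding `X → F` factors through `X → H₁*`, so `Ext (R ⧸ 𝔪) X → Ext (R ⧸ 𝔪) H₁*` is injective
wherever `Ext (R ⧸ 𝔪) X → Ext (R ⧸ 𝔪) F` is. In degrees up to `dim R` this follows from the depth of
`N`, and together with the depth of `H₁*` it yields that of `H₁* ⧸ X`.
-/

section StableEquivalence

variable {R M N P F F' : Type*} [CommRing R]
  [AddCommGroup F] [Module R F] [Module.Free R F] [Module.Finite R F]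
  [AddCommGroup F'] [Module R F'] [Module.Free R F'] [Module.Finite R F']
  [AddCommGroup M] [Module R M] [AddCommGroup N] [Module R N] [AddCommGroup P] [Module R P]

/-- Isomorphism of modules up to finite free direct summands. -/
def StablyEquiv (R M N : Type*) [CommRing R] [AddCommGroup M] [Module R M]
    [AddCommGroup N] [Module R N] : Prop :=
  ∃ a b : ℕ, Nonempty ((M × (Fin a → R)) ≃ₗ[R] N × (Fin b → R))

namespace StablyEquiv

lemma of_prod_equiv_prod (e : (M × F) ≃ₗ[R] N × F') : StablyEquiv R M N := by
  let eF := ((Module.Free.chooseBasis R F).reindex (Fintype.equivFin _)).equivFun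
  let eF' := ((Module.Free.chooseBasis R F').reindex (Fintype.equivFin _)).equivFun
  exact ⟨_, _, ⟨(LinearEquiv.refl R M).prodCongr eF.symm ≪≫ₗ e ≪≫ₗ
    (LinearEquiv.refl R N).prodCongr eF'⟩⟩

lemma of_linearEquiv (e : M ≃ₗ[R] N) : StablyEquiv R M N :=
  ⟨0, 0, ⟨e.prodCongr (LinearEquiv.refl R _)⟩⟩

lemma of_equiv_free_prod (e : M ≃ₗ[R] F × N) : StablyEquiv R M N :=
  of_prod_equiv_prod (F := Fin 0 → R) (LinearEquiv.prodUnique ≪≫ₗ e ≪≫ₗ LinearEquiv.prodComm R F N)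

lemma symm (h : StablyEquiv R M N) : StablyEquiv R N M :=
  let ⟨a, b, ⟨e⟩⟩ := h
  ⟨b, a, ⟨e.symm⟩⟩

lemma trans (hMN : StablyEquiv R M N) (hNP : StablyEquiv R N P) : StablyEquiv R M P := by
  obtain ⟨a, b, ⟨e⟩⟩ := hMN
  obtain ⟨c, d, ⟨e'⟩⟩ := hNP
  have swap : ((N × (Fin b → R)) × (Fin c → R)) ≃ₗ[R] (N × (Fin c → R)) × (Fin b → R) :=
    LinearEquiv.prodAssoc R _ _ _ ≪≫ₗ
      (LinearEquiv.refl R N).prodCongr (LinearEquiv.prodComm R _ _) ≪≫ₗ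
      (LinearEquiv.prodAssoc R _ _ _).symm
  exact of_prod_equiv_prod <| (LinearEquiv.prodAssoc R _ _ _).symm ≪≫ₗ
    e.prodCongr (LinearEquiv.refl R _) ≪≫ₗ swap ≪≫ₗ e'.prodCongr (LinearEquiv.refl R _) ≪≫ₗ
    LinearEquiv.prodAssoc R _ _ _

end StablyEquiv

end StableEquivalence

section Schanuel

open LinearMap

variable {R M M' N N' F F' W W' : Type*} [CommRing R]
  [AddCommGroup F'] [Module R F'] [AddCommGroup M'] [Module R M'] [AddCommGroup N'] [Module R N']
  [AddCommGroup W'] [Module R W'] [AddCommGroup F] [Module R F] [AddCommGroup M] [Module R M]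
  [AddCommGroup N] [Module R N] [AddCommGroup W] [Module R W]

/-- The cokernel of the dual map `N* → M*` of `f : M → N`. When `f` is the first map of a minimal
presentation of a module, this is the transpose of that module. -/
abbrev DualCoker (f : M →ₗ[R] N) : Type _ := Module.Dual R M ⧸ range f.dualMap

lemma comp_snd_comp_skewProd {π : F →ₗ[R] W} {π' : F' →ₗ[R] W} {t : F' →ₗ[R] F}
    (h : π ∘ₗ t = π') :
    (π ∘ₗ snd R F' F) ∘ₗ ((LinearEquiv.refl R F').skewProd (.refl R F) t : F' × F →ₗ[R] _) =
      π'.coprod π := by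
  subst h
  ext <;> simp

-- Both maps become `π'.coprod π` after a shear of the source.
lemma exists_linearEquiv_comp_snd_eq [Module.Projective R F] [Module.Projective R F']
    {π : F →ₗ[R] W} {π' : F' →ₗ[R] W} (hπ : Function.Surjective π)
    (hπ' : Function.Surjective π') :
    ∃ e : (F' × F) ≃ₗ[R] F × F', (π' ∘ₗ snd R F F') ∘ₗ e.toLinearMap = π ∘ₗ snd R F' F := by
  obtain ⟨t, ht⟩ := Module.projective_lifting_property π π' hπ
  obtain ⟨t', ht'⟩ := Module.projective_lifting_property π' π hπ'
  let shear := (LinearEquiv.refl R F').skewProd (.refl R F) t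
  let shear' := (LinearEquiv.refl R F).skewProd (.refl R F') t'
  refine ⟨shear.symm ≪≫ₗ LinearEquiv.prodComm R F' F ≪≫ₗ shear', LinearMap.ext fun x ↦ ?_⟩
  obtain ⟨y, rfl⟩ := shear.surjective x
  have hleft := LinearMap.congr_fun (comp_snd_comp_skewProd ht') y.swap
  have hright := LinearMap.congr_fun (comp_snd_comp_skewProd ht) y
  simpa [shear, shear', add_comm] using hleft.trans ((add_comm _ _).trans hright.symm)

lemma stablyEquiv_ker_of_comp_equiv {f : M →ₗ[R] W} {f' : M' →ₗ[R] W} (e : M ≃ₗ[R] M')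
    (h : f' ∘ₗ e.toLinearMap = f) : StablyEquiv R (ker f) (ker f') := by
  subst h
  exact .of_linearEquiv (e.ofSubmodule' (ker f'))

lemma stablyEquiv_ker_comp_snd [Module.Free R F'] [Module.Finite R F'] (π : F →ₗ[R] W) :
    StablyEquiv R (ker (π ∘ₗ snd R F' F)) (ker π) :=
  .of_equiv_free_prod (F := F')
    { toFun x := (x.1.1, ⟨x.1.2, x.2⟩)
      invFun x := ⟨(x.1, x.2), x.2.2⟩
      map_add' _ _ := rfl
      map_smul' _ _ := rfl }

theorem stablyEquiv_ker_of_surjective [Module.Free R F] [Module.Finite R F] [Module.Free R F']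
    [Module.Finite R F'] {π : F →ₗ[R] W} {π' : F' →ₗ[R] W} (hπ : Function.Surjective π)
    (hπ' : Function.Surjective π') : StablyEquiv R (ker π) (ker π') := by
  obtain ⟨e, he⟩ := exists_linearEquiv_comp_snd_eq hπ hπ'
  exact (stablyEquiv_ker_comp_snd π).symm.trans <|
    (stablyEquiv_ker_of_comp_equiv e he).trans (stablyEquiv_ker_comp_snd π')

lemma stablyEquiv_ker_of_surjective_quotient [Module.Free R F] [Module.Finite R F]
    [Module.Free R F'] [Module.Finite R F'] {X : Submodule R F'} {π : F →ₗ[R] F' ⧸ X}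
    (hπ : Function.Surjective π) : StablyEquiv R (ker π) X :=
  (stablyEquiv_ker_of_surjective hπ X.mkQ_surjective).trans <|
    .of_linearEquiv (LinearEquiv.ofEq _ _ X.ker_mkQ)

lemma stablyEquiv_dualCoker_of_comm {f : M →ₗ[R] N} {f' : M' →ₗ[R] N'} (e : M ≃ₗ[R] M')
    (g : N ≃ₗ[R] N') (h : f' ∘ₗ e.toLinearMap = g.toLinearMap ∘ₗ f) :
    StablyEquiv R (DualCoker f) (DualCoker f') := by
  have hdual : e.dualMap.toLinearMap ∘ₗ f'.dualMap = f.dualMap ∘ₗ g.dualMap.toLinearMap :=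
    congrArg LinearMap.dualMap h
  refine .symm <| .of_linearEquiv <| Submodule.Quotient.equiv _ _ e.dualMap ?_
  rw [← LinearMap.range_comp, hdual, range_comp_of_range_eq_top]
  exact g.dualMap.range

lemma nonempty_dualCoker_prodMap_equiv (f : M →ₗ[R] N) (f' : M' →ₗ[R] N') :
    Nonempty (DualCoker (f.prodMap f') ≃ₗ[R] DualCoker f × DualCoker f') := by
  let q : Module.Dual R (M × M') →ₗ[R] DualCoker f × DualCoker f' :=
    ((range f.dualMap).mkQ ∘ₗ (inl R M M').dualMap).prod
      ((range f'.dualMap).mkQ ∘ₗ (inr R M M').dualMap)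
  have hq : Function.Surjective q := by
    rintro ⟨y, y'⟩
    obtain ⟨φ, rfl⟩ := Submodule.mkQ_surjective _ y
    obtain ⟨φ', rfl⟩ := Submodule.mkQ_surjective _ y'
    exact ⟨φ.coprod φ', by simp [q, dualMap_apply']⟩
  have hker : range (f.prodMap f').dualMap = ker q := by
    ext φ
    simp only [q, ker_prod, Submodule.mem_inf, mem_ker, comp_apply, Submodule.mkQ_apply,
      Submodule.Quotient.mk_eq_zero, mem_range, dualMap_apply']
    constructor
    · rintro ⟨ψ, rfl⟩
      exact ⟨⟨ψ ∘ₗ inl R N N', by ext; simp⟩, ψ ∘ₗ inr R N N', by ext; simp⟩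
    · rintro ⟨⟨ψ, hψ⟩, ψ', hψ'⟩
      exact ⟨ψ.coprod ψ', by rw [← coprod_comp_inl_inr φ, ← hψ, ← hψ']; ext <;> simp⟩
  exact ⟨Submodule.quotEquivOfEq _ _ hker ≪≫ₗ q.quotKerEquivOfSurjective hq⟩

lemma stablyEquiv_dualCoker_comp_snd [Module.Free R F'] [Module.Finite R F'] (π : F →ₗ[R] W) :
    StablyEquiv R (DualCoker (π ∘ₗ snd R F' F)) (DualCoker π) := by
  let zero : F' →ₗ[R] (Fin 0 → R) := 0
  have hcomm : (zero.prodMap π) ∘ₗ (LinearEquiv.refl R (F' × F)).toLinearMap =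
      (LinearEquiv.uniqueProd (R := R)).symm.toLinearMap ∘ₗ (π ∘ₗ snd R F' F) :=
    LinearMap.ext fun _ ↦ Prod.ext (Subsingleton.elim _ _) rfl
  have hzero : range zero.dualMap = ⊥ := range_eq_bot.mpr (LinearMap.ext fun _ ↦ comp_zero _)
  obtain ⟨e⟩ := nonempty_dualCoker_prodMap_equiv zero π
  exact (stablyEquiv_dualCoker_of_comm _ _ hcomm).trans <| .of_equiv_free_prod <|
    e ≪≫ₗ (Submodule.quotEquivOfEqBot _ hzero).prodCongr (.refl R _)

lemma stablyEquiv_dualCoker_prodMap_id (f : M →ₗ[R] N) :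
    StablyEquiv R (DualCoker (f.prodMap (.id : M' →ₗ[R] M'))) (DualCoker f) := by
  obtain ⟨e⟩ := nonempty_dualCoker_prodMap_equiv f (.id : M' →ₗ[R] M')
  have : Subsingleton (DualCoker (.id : M' →ₗ[R] M')) :=
    Submodule.Quotient.subsingleton_iff.mpr (range_eq_top.mpr fun φ ↦ ⟨φ, rfl⟩)
  exact .of_equiv_free_prod (e ≪≫ₗ LinearEquiv.prodComm R _ _)

lemma stablyEquiv_dualCoker_of_surjective [Module.Free R F] [Module.Finite R F] [Module.Free R F']
    [Module.Finite R F'] {π : F →ₗ[R] W} {π' : F' →ₗ[R] W} (hπ : Function.Surjective π)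
    (hπ' : Function.Surjective π') : StablyEquiv R (DualCoker π) (DualCoker π') := by
  obtain ⟨e, he⟩ := exists_linearEquiv_comp_snd_eq hπ hπ'
  exact (stablyEquiv_dualCoker_comp_snd π).symm.trans <|
    (stablyEquiv_dualCoker_of_comm e (.refl R W) he).trans (stablyEquiv_dualCoker_comp_snd π')

theorem StablyEquiv.dualCoker_of_surjective [Module.Free R F] [Module.Finite R F]
    [Module.Free R F'] [Module.Finite R F'] {π : F →ₗ[R] W} {π' : F' →ₗ[R] W'}
    (h : StablyEquiv R W W') (hπ : Function.Surjective π) (hπ' : Function.Surjective π') :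
    StablyEquiv R (DualCoker π) (DualCoker π') := by
  obtain ⟨a, b, ⟨e⟩⟩ := h
  let ρ : F × (Fin a → R) →ₗ[R] W × (Fin a → R) := π.prodMap .id
  let ρ' : F' × (Fin b → R) →ₗ[R] W' × (Fin b → R) := π'.prodMap .id
  have hρ : Function.Surjective (e.toLinearMap ∘ₗ ρ) :=
    e.surjective.comp (hπ.prodMap Function.surjective_id)
  have hρ' : Function.Surjective ρ' := hπ'.prodMap Function.surjective_id
  have htransport : StablyEquiv R (DualCoker ρ) (DualCoker (e.toLinearMap ∘ₗ ρ)) :=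
    stablyEquiv_dualCoker_of_comm (.refl R _) e rfl
  exact (stablyEquiv_dualCoker_prodMap_id π).symm.trans <| htransport.trans <|
    (stablyEquiv_dualCoker_of_surjective hρ hρ').trans <|
    stablyEquiv_dualCoker_prodMap_id π'

end Schanuel

section Torsionless

open LinearMap

variable {R M F L : Type*} [CommRing R] [AddCommGroup M] [Module R M]
  [AddCommGroup F] [Module R F] [AddCommGroup L] [Module R L]

lemma injective_dualEval_of_injective [Module.IsReflexive R F] {j : M →ₗ[R] F}
    (hj : Function.Injective j) : Function.Injective (Module.Dual.eval R M) := by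
  refine Function.Injective.of_comp (f := j.dualMap.dualMap) ?_
  exact (Module.bijective_dual_eval R F).injective.comp hj

lemma dualAnnihilator_dualCoannihilator_ker {p : F →ₗ[R] M}
    (hM : Function.Injective (Module.Dual.eval R M)) :
    (ker p).dualAnnihilator.dualCoannihilator = ker p := by
  refine le_antisymm (fun x hx ↦ hM (LinearMap.ext fun φ ↦ ?_))
    (ker p).le_dualAnnihilator_dualCoannihilator
  rw [Submodule.mem_dualCoannihilator] at hx
  simpa using hx (φ ∘ₗ p) ((Submodule.mem_dualAnnihilator _).mpr fun y hy ↦ by simp_all)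

lemma surjective_dualMap_subtype_range_dualMap [Module.IsReflexive R F] {d : L →ₗ[R] F}
    (hd : (range d).dualAnnihilator.dualCoannihilator = range d) :
    Function.Surjective (range d.dualMap).subtype.dualMap := by
  intro φ
  obtain ⟨x, hx⟩ :=
    (Module.bijective_dual_eval R F).surjective (φ ∘ₗ d.dualMap.rangeRestrict)
  have hxd : x ∈ range d := by
    rw [← hd, Submodule.mem_dualCoannihilator, ← ker_dualMap_eq_dualAnnihilator_range]
    intro ψ hψ
    have hψ0 : d.dualMap.rangeRestrict ψ = 0 := Subtype.ext hψ
    simpa [hψ0] using LinearMap.congr_fun hx ψ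
  obtain ⟨y, rfl⟩ := hxd
  refine ⟨Module.Dual.eval R L y, LinearMap.ext ?_⟩
  rintro ⟨_, ψ, rfl⟩
  exact LinearMap.congr_fun hx ψ

lemma nonempty_quotient_equiv_dualCoker_mkQ [Module.IsReflexive R F] {X : Submodule R F}
    (hX : X.dualAnnihilator.dualCoannihilator = X) :
    Nonempty ((F ⧸ X) ≃ₗ[R] DualCoker X.dualAnnihilator.mkQ) := by
  refine ⟨Submodule.Quotient.equiv _ _ (Module.evalEquiv R F) ?_⟩
  rw [range_dualMap_eq_dualAnnihilator_ker_of_surjective _ (Submodule.mkQ_surjective _),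
    Submodule.ker_mkQ, Submodule.map_equiv_eq_comap_symm]
  ext ξ
  obtain ⟨x, rfl⟩ := (Module.evalEquiv R F).surjective ξ
  nth_rw 1 [← hX]
  simp [Submodule.mem_dualAnnihilator, Submodule.mem_dualCoannihilator]

lemma nonempty_range_dualMap_equiv_dualCoker {d : L →ₗ[R] F} {p : F →ₗ[R] M}
    (hdp : range d = ker p) (hp : Function.Surjective p) :
    Nonempty (range d.dualMap ≃ₗ[R] DualCoker p) := by
  have hker : range p.dualMap = ker d.dualMap := by
    rw [range_dualMap_eq_dualAnnihilator_ker_of_surjective p hp,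
      ker_dualMap_eq_dualAnnihilator_range, hdp]
  exact ⟨d.dualMap.quotKerEquivRange.symm ≪≫ₗ Submodule.quotEquivOfEq _ _ hker.symm⟩

end Torsionless

section Extension

open LinearMap

variable {R M F X L : Type*} [CommRing R] [AddCommGroup M] [Module R M]
  [AddCommGroup F] [Module R F] [AddCommGroup X] [Module R X] [AddCommGroup L] [Module R L]

lemma exists_comp_eq_of_surjective_dualMap [Module.Free R F] [Module.Finite R F] {i : X →ₗ[R] L}
    (hi : Function.Surjective i.dualMap) (g : X →ₗ[R] F) : ∃ t : L →ₗ[R] F, t ∘ₗ i = g := by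
  let b := Module.Free.chooseBasis R F
  choose φ hφ using fun k ↦ hi (b.coord k ∘ₗ g)
  refine ⟨b.equivFun.symm.toLinearMap ∘ₗ LinearMap.pi φ, LinearMap.ext fun x ↦ ?_⟩
  have hcoord : LinearMap.pi φ (i x) = b.equivFun (g x) :=
    funext fun k ↦ LinearMap.congr_fun (hφ k) x
  simp [hcoord]

lemma surjective_dualMap_prodMap_id {i : X →ₗ[R] L} (hi : Function.Surjective i.dualMap) :
    Function.Surjective (i.prodMap (.id : M →ₗ[R] M)).dualMap := by
  intro φ
  obtain ⟨ψ, hψ⟩ := hi (φ ∘ₗ inl R X M)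
  refine ⟨ψ.coprod (φ ∘ₗ inr R X M), LinearMap.ext fun ⟨x, z⟩ ↦ ?_⟩
  have hx : ψ (i x) = φ (x, 0) := LinearMap.congr_fun hψ x
  simp [hx, ← map_add]

lemma exact_prodMap_id_comp_fst {i : X →ₗ[R] L} {p : L →ₗ[R] F} (h : Function.Exact i p) :
    Function.Exact (i.prodMap (.id : M →ₗ[R] M)) (p ∘ₗ fst R L M) := by
  rintro ⟨y, z⟩
  refine (h y).trans ⟨?_, ?_⟩
  · rintro ⟨x, rfl⟩
    exact ⟨(x, z), rfl⟩
  · rintro ⟨x, hx⟩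
    exact ⟨x.1, congrArg Prod.fst hx⟩

end Extension

section Cosyzygy

open LinearMap

variable {R M E₀ E₁ G H₀ H₁ : Type*} [CommRing R] [AddCommGroup M] [Module R M]
  [AddCommGroup E₀] [Module R E₀] [Module.Free R E₀] [Module.Finite R E₀]
  [AddCommGroup E₁] [Module R E₁] [Module.Free R E₁] [Module.Finite R E₁]
  [AddCommGroup G] [Module R G] [Module.Free R G] [Module.Finite R G]
  [AddCommGroup H₀] [Module R H₀] [Module.Free R H₀] [Module.Finite R H₀]
  [AddCommGroup H₁] [Module R H₁]

-- `ker s` and `range d*` are both first syzygies of `Tr M`, hence stably isomorphic, and then so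
-- are the cokernels of the duals of their free covers. These are `range δ*` and, as `M` is
-- torsionless, `E₀ ⧸ range d ≃ M`.
theorem stablyEquiv_range_dualMap_of_presentation (hM : Function.Injective (Module.Dual.eval R M))
    {d : E₁ →ₗ[R] E₀} {p : E₀ →ₗ[R] M} (hdp : range d = ker p) (hp : Function.Surjective p)
    {s : G →ₗ[R] DualCoker d} (hs : Function.Surjective s)
    {δ : H₁ →ₗ[R] H₀} {q : H₀ →ₗ[R] ker s} (hδq : range δ = ker q) (hq : Function.Surjective q) :
    StablyEquiv R (range δ.dualMap) M := by
  have hclosed : (range d).dualAnnihilator.dualCoannihilator = range d := by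
    rw [hdp, dualAnnihilator_dualCoannihilator_ker hM]
  have hsyz : StablyEquiv R (ker s) (Module.Dual R E₀ ⧸ (range d).dualAnnihilator) :=
    (stablyEquiv_ker_of_surjective_quotient hs).trans <| .of_linearEquiv <|
      d.dualMap.quotKerEquivRange.symm ≪≫ₗ
        Submodule.quotEquivOfEq _ _ (ker_dualMap_eq_dualAnnihilator_range d)
  have hdual : StablyEquiv R (DualCoker q) (DualCoker (range d).dualAnnihilator.mkQ) :=
    hsyz.dualCoker_of_surjective hq (Submodule.mkQ_surjective _)
  obtain ⟨eδ⟩ := nonempty_range_dualMap_equiv_dualCoker hδq hq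
  obtain ⟨ed⟩ := nonempty_quotient_equiv_dualCoker_mkQ hclosed
  have eM : (E₀ ⧸ range d) ≃ₗ[R] M :=
    Submodule.quotEquivOfEq _ _ hdp ≪≫ₗ p.quotKerEquivOfSurjective hp
  exact (StablyEquiv.of_linearEquiv eδ).trans <| hdual.trans <| .of_linearEquiv (ed.symm ≪≫ₗ eM)

end Cosyzygy

section Depth

open CategoryTheory CategoryTheory.Abelian IsLocalRing

-- `Ext i A C` embeds into `Ext (i + 1) A X`, and its image is killed by `f`, hence by `j = f ≫ t`;
-- but `j` acts injectively on `Ext (i + 1) A X`.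
lemma subsingleton_ext_of_shortExact_of_factors {𝒞 : Type*} [Category 𝒞] [Abelian 𝒞] [HasExt 𝒞]
    {A X L C F N : 𝒞} {f : X ⟶ L} {g : L ⟶ C} {w : f ≫ g = 0} {j : X ⟶ F} {π : F ⟶ N}
    {w' : j ≫ π = 0} (hS : (ShortComplex.mk f g w).ShortExact)
    (hS' : (ShortComplex.mk j π w').ShortExact) {t : L ⟶ F} (ht : f ≫ t = j) {i : ℕ}
    (hL : Subsingleton (Ext A L i)) (hN : Subsingleton (Ext A N i)) :
    Subsingleton (Ext A C i) := by
  refine subsingleton_of_forall_eq 0 fun x ↦ ?_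
  let y : Ext A X (i + 1) := x.comp hS.extClass rfl
  have hyf : y.comp (Ext.mk₀ f) (add_zero _) = 0 := by
    simp [y, hS.extClass_comp]
  have hyj : y.comp (Ext.mk₀ j) (add_zero _) = 0 := by
    rw [← ht, ← Ext.mk₀_comp_mk₀, ← Ext.comp_assoc_of_third_deg_zero, hyf, Ext.zero_comp]
  obtain ⟨z, hz⟩ := Ext.covariant_sequence_exact₁ A hS' y hyj rfl
  have hy : y = 0 := by rw [← hz, Subsingleton.elim z 0, Ext.zero_comp]
  obtain ⟨v, hv⟩ := Ext.covariant_sequence_exact₃ A hS x rfl hy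
  rw [← hv, Subsingleton.elim v 0, Ext.zero_comp]

universe u

variable {R : Type u} [CommRing R] [IsLocalRing R] {X L C F N : Type u}
  [AddCommGroup X] [Module R X] [AddCommGroup L] [Module R L] [AddCommGroup C] [Module R C]
  [AddCommGroup F] [Module R F] [AddCommGroup N] [Module R N] {d : ℕ}

/-- The inequality `depth X ≥ d`, expressed as the vanishing of `Ext i (R ⧸ 𝔪) X` for `i < d`
(Rees). The zero module has every depth. -/
def DepthGE (R : Type u) [CommRing R] [IsLocalRing R] (X : Type u) [AddCommGroup X] [Module R X]
    (d : ℕ) : Prop :=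
  ∀ i < d, Subsingleton (Ext (ModuleCat.of R (R ⧸ maximalIdeal R)) (ModuleCat.of R X) i)

lemma depthGE_of_subsingleton [Subsingleton X] : DepthGE R X d := by
  intro i _
  have hzero : 𝟙 (ModuleCat.of R X) = 0 := (ModuleCat.isZero_of_subsingleton _).eq_of_src _ _
  refine subsingleton_of_forall_eq 0 fun x ↦ ?_
  rw [← Ext.comp_mk₀_id x, hzero, Ext.mk₀_zero, Ext.comp_zero]

lemma depthGE_iff_exists_isWeaklyRegular [IsNoetherianRing R] [Module.Finite R X] [Nontrivial X] :
    DepthGE R X d ↔ ∃ rs : List R, rs.length = d ∧ (∀ r ∈ rs, r ∈ maximalIdeal R) ∧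
      RingTheory.Sequence.IsWeaklyRegular X rs := by
  have hsmul : maximalIdeal R • (⊤ : Submodule R X) < ⊤ :=
    lt_top_iff_ne_top.mpr
      (Submodule.top_ne_ideal_smul_of_le_jacobson_annihilator (maximalIdeal_le_jacobson _)).symm
  have hsupp :
      Module.support R (R ⧸ maximalIdeal R) = PrimeSpectrum.zeroLocus (maximalIdeal R) := by
    rw [Module.support_eq_zeroLocus, Ideal.annihilator_quotient]
  constructor
  · intro h
    obtain ⟨rs, hlen, hmem, hreg⟩ := ModuleCat.exists_isRegular_of_exists_subsingleton_ext
      (maximalIdeal R) d (ModuleCat.of R X) hsmul (ModuleCat.of R (R ⧸ maximalIdeal R)) hsupp h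
    exact ⟨rs, hlen, hmem, hreg.toIsWeaklyRegular⟩
  · rintro ⟨rs, rfl, hmem, hreg⟩
    exact ModuleCat.subsingleton_ext_of_exists_isRegular (maximalIdeal R)
      (ModuleCat.of R (R ⧸ maximalIdeal R)) hsupp.subset (ModuleCat.of R X) hsmul rs hmem
      ((isRegular_iff_isWeaklyRegular_of_subset_maximalIdeal hmem).mpr hreg)

theorem DepthGE.of_exact_of_factors {f : X →ₗ[R] L} {g : L →ₗ[R] C} {j : X →ₗ[R] F} {π : F →ₗ[R] N}
    (hf : Function.Injective f) (hfg : Function.Exact f g) (hg : Function.Surjective g)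
    (hj : Function.Injective j) (hjπ : Function.Exact j π) (hπ : Function.Surjective π)
    {t : L →ₗ[R] F} (ht : t ∘ₗ f = j) (hL : DepthGE R L d) (hN : DepthGE R N d) :
    DepthGE R C d := fun i hi ↦
  subsingleton_ext_of_shortExact_of_factors
    (ModuleCat.shortComplex_shortExact
      (ModuleCat.shortComplexOfCompEqZero f g hfg.linearMap_comp_eq_zero) hfg hf hg)
    (ModuleCat.shortComplex_shortExact
      (ModuleCat.shortComplexOfCompEqZero j π hjπ.linearMap_comp_eq_zero) hjπ hj hπ)
    (t := ModuleCat.ofHom t) (congrArg ModuleCat.ofHom ht) (hL i hi) (hN i hi)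

end Depth

section MaximalCohenMacaulay

open LinearMap

variable {R X L F N : Type} [CommRing R] [AddCommGroup X] [Module R X]
  [AddCommGroup F] [Module R F] [AddCommGroup N] [Module R N] [AddCommGroup L] [Module R L]

lemma isMCM_iff_depthGE [IsLocalRing R] [IsNoetherianRing R] [Module.Finite R X] {d : ℕ}
    (hd : d = ringKrullDim R) : IsMCM R X ↔ DepthGE R X d := by
  rcases subsingleton_or_nontrivial X with hX | hX
  · exact ⟨fun _ ↦ depthGE_of_subsingleton, fun _ ↦ ⟨inferInstance, .inl hX⟩⟩
  · rw [depthGE_iff_exists_isWeaklyRegular, IsMCM,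
      IsLocalRing.jacobson_eq_maximalIdeal ⊥ bot_ne_top, ← hd]
    simp only [Nat.cast_inj, not_subsingleton, false_or]
    constructor
    · rintro ⟨_, rs, hmem, hreg, hlen⟩
      exact ⟨rs, hlen, hmem, hreg⟩
    · rintro ⟨rs, hlen, hmem, hreg⟩
      exact ⟨inferInstance, rs, hmem, hreg, hlen⟩

lemma isMCM_of_flat [Nontrivial R] [Module.Flat R F] [Module.Finite R F] (hR : IsMCM R R) :
    IsMCM R F := by
  rcases hR with ⟨-, hR | ⟨rs, hmem, hreg, hlen⟩⟩
  · exact absurd hR (not_subsingleton R)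
  · have hregF := hreg.isWeaklyRegular_rTensor (M₂ := F)
    exact ⟨inferInstance, .inr ⟨rs, hmem,
      (LinearEquiv.isWeaklyRegular_congr (TensorProduct.lid R F) rs).mp hregF, hlen⟩⟩

theorem isMCM_quotient_of_surjective_dualMap [IsLocalRing R] [IsNoetherianRing R]
    [Module.Free R L] [Module.Finite R L] [Module.Free R F] [Module.Finite R F]
    (hR : IsMCM R R) (hN : IsMCM R N) {π : F →ₗ[R] N} (hπ : Function.Surjective π)
    {X : Submodule R L} (hX : Function.Surjective X.subtype.dualMap)
    (h : StablyEquiv R X (ker π)) : IsMCM R (L ⧸ X) := by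
  obtain ⟨a, b, ⟨e⟩⟩ := h
  let i : X × (Fin a → R) →ₗ[R] L × (Fin a → R) := X.subtype.prodMap .id
  let i' : ker π × (Fin b → R) →ₗ[R] F × (Fin b → R) := (ker π).subtype.prodMap .id
  have hi : Function.Injective i := X.subtype_injective.prodMap Function.injective_id
  have hi' : Function.Injective i' := (ker π).subtype_injective.prodMap Function.injective_id
  have hexact : Function.Exact i (X.mkQ ∘ₗ fst R L (Fin a → R)) :=
    exact_prodMap_id_comp_fst (exact_subtype_mkQ X)
  have hexact' : Function.Exact i' (π ∘ₗ fst R F (Fin b → R)) :=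
    exact_prodMap_id_comp_fst (exact_subtype_ker_map π)
  obtain ⟨t, ht⟩ := exists_comp_eq_of_surjective_dualMap
    (surjective_dualMap_prodMap_id (M := Fin a → R) hX) (i' ∘ₗ e.toLinearMap)
  obtain ⟨d, hd⟩ : ∃ d : ℕ, d = ringKrullDim R :=
    ⟨_, Order.krullDim_eq_length_of_finiteDimensionalOrder.symm⟩
  have := hN.1
  exact (isMCM_iff_depthGE hd).mpr <| DepthGE.of_exact_of_factors hi hexact
    (X.mkQ_surjective.comp Prod.fst_surjective) (hi'.comp e.injective)
    (e.surjective.comp_exact_iff_exact.mpr hexact') (hπ.comp Prod.fst_surjective) ht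
    ((isMCM_iff_depthGE hd).mp (isMCM_of_flat hR)) ((isMCM_iff_depthGE hd).mp hN)

end MaximalCohenMacaulay

theorem cosyzygy_isMCM_and_syzygy_cosyzygy_eq_up_to_free_general
    (R : Type) [CommRing R] [IsNoetherianRing R] [IsLocalRing R] (hCM : IsMCM R R)
    (M : Type) [AddCommGroup M] [Module R M] (hM : MemOmegaCM R M) (D : CosyzData R M) :
    IsMCM R (CosyzOf R D) ∧
      ∀ S : SyzData R (CosyzOf R D), StablyEquiv R M (SyzOf R S) := by
  obtain ⟨N, hN, n, π, hπ, -, ⟨ι⟩⟩ := hM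
  obtain ⟨P, S, Q⟩ := D
  have hMeval : Function.Injective (Module.Dual.eval R M) :=
    injective_dualEval_of_injective (j := (LinearMap.ker π).subtype ∘ₗ ι.toLinearMap)
      ((LinearMap.ker π).subtype_injective.comp ι.injective)
  have hSeval : Function.Injective (Module.Dual.eval R (SyzOf R S)) :=
    injective_dualEval_of_injective (LinearMap.ker S.p).subtype_injective
  have hstable : StablyEquiv R (LinearMap.range Q.d.dualMap) M :=
    stablyEquiv_range_dualMap_of_presentation hMeval P.exact P.surj S.surj Q.exact Q.surj
  have hextend : Function.Surjective (LinearMap.range Q.d.dualMap).subtype.dualMap := by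
    refine surjective_dualMap_subtype_range_dualMap ?_
    rw [Q.exact, dualAnnihilator_dualCoannihilator_ker hSeval]
  refine ⟨isMCM_quotient_of_surjective_dualMap hCM hN hπ hextend
    (hstable.trans (.of_linearEquiv ι)), fun S' ↦ ?_⟩
  exact hstable.symm.trans (stablyEquiv_ker_of_surjective_quotient S'.surj).symm

/-- Lemma 2.5. Let `(R, m, k)` be a Cohen-Macaulay local ring with an
isolated singularity and `M ∈ ΩCM(R)`. Then `Ω⁻¹M` is Cohen-Macaulay, and `M ≅ Ω Ω⁻¹ M`
up to free direct summands. -/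
theorem cosyzygy_isMCM_and_syzygy_cosyzygy_eq_up_to_free
    (R : Type) [CommRing R] [IsNoetherianRing R] [IsLocalRing R]
    (hCM : IsMCM R R) (hsing : IsolatedSingularity R)
    (M : Type) [AddCommGroup M] [Module R M] (hM : MemOmegaCM R M)
    (D : CosyzData R M) :
    IsMCM R (CosyzOf R D) ∧
      ∀ S : SyzData R (CosyzOf R D), ∃ a b : ℕ,
        Nonempty ((M × (Fin a → R)) ≃ₗ[R] (Prod (SyzOf R S) (Fin b → R))) := by
  exact cosyzygy_isMCM_and_syzygy_cosyzygy_eq_up_to_free_general R hCM M hM D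

end Paper
end

section
/- Let R be a Noetherian local ring with maximal ideal m, let R̂ denote the m-adic completion of R, and let M be a finitely generated R-module. Then M has a nonzero free R-module as a direct summand if and only if M ⊗_R R̂ has a nonzero free R̂-module as a direct summand. -/
/-!
Common definitions: Cohen-Macaulay modules, isolated singularities, stable Hom,
syzygies, transposes, Auslander-Reiten sequences, and the Grothendieck-type groups
`G(CM(R))`, `Ex(CM(R))`, `AR(CM(R))` from the paper
"Syzygies of Cohen-Macaulay modules and Grothendieck groups".

Throughout, the maximal ideal of a local ring is realized as the Jacobson radical
`(⊥ : Ideal R).jacobson` (for a local ring these coincide), which lets the definitions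
make sense without a `IsLocalRing` instance argument.
-/

namespace Paper

/-!
A module splits off a copy of the ring exactly when some linear functional takes the value `1`,
and over a local ring this happens exactly when the values of all functionals generate the unit
ideal. This trace ideal commutes with flat base change of finitely presented modules, because a
map from such a module to a flat module factors through a finite free module; and a faithfully
flat extension, such as the completion of a Noetherian local ring, detects the unit ideal.
-/

section TraceIdeal

open IsLocalRing
open scoped TensorProduct

variable {R S M N : Type*} [CommRing R] [AddCommGroup M] [Module R M]
  [AddCommGroup N] [Module R N] [CommRing S] [Algebra R S]

variable (R M) in
/-- The trace ideal of the module `M`: the ideal of `R` generated by the values of all linear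
functionals on `M`. -/
def traceIdeal : Ideal R :=
  ⨆ f : Module.Dual R M, LinearMap.range f

theorem traceIdeal_le_iff {I : Ideal R} :
    traceIdeal R M ≤ I ↔ ∀ (f : Module.Dual R M) (x : M), f x ∈ I := by
  simp only [traceIdeal, iSup_le_iff, LinearMap.range_le_iff_comap, Submodule.eq_top_iff',
    Submodule.mem_comap]

theorem apply_mem_traceIdeal (f : Module.Dual R M) (x : M) : f x ∈ traceIdeal R M :=
  traceIdeal_le_iff.mp le_rfl f x

theorem exists_dual_apply_eq_one_of_traceIdeal_eq_top [IsLocalRing R]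
    (h : traceIdeal R M = ⊤) : ∃ (f : Module.Dual R M) (x : M), f x = 1 := by
  by_contra! no_functional
  have le_maximalIdeal : traceIdeal R M ≤ maximalIdeal R := by
    refine traceIdeal_le_iff.mpr fun f x ↦ (mem_maximalIdeal _).mpr ?_
    rintro ⟨u, hu⟩
    exact no_functional f ((↑u⁻¹ : R) • x) (by simp [← hu])
  exact (maximalIdeal.isMaximal R).ne_top (top_le_iff.mp (h ▸ le_maximalIdeal))

theorem apply_mem_traceIdeal_smul_top [Module.FinitePresentation R M] [Module.Flat R N]
    (f : M →ₗ[R] N) (x : M) : f x ∈ traceIdeal R M • (⊤ : Submodule R N) := by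
  obtain ⟨k, g, h, rfl⟩ := Module.Flat.exists_factorization_of_finitePresentation f
  have hsum : h (g x) = ∑ i, g x i • h (Finsupp.single i 1) := by
    conv_lhs => rw [← Finsupp.univ_sum_single (g x), map_sum]
    simp only [← map_smul, Finsupp.smul_single_one]
  rw [LinearMap.comp_apply, hsum]
  exact Submodule.sum_mem _ fun i _ ↦ Submodule.smul_mem_smul
    (apply_mem_traceIdeal (Finsupp.lapply i ∘ₗ g) x) Submodule.mem_top

theorem traceIdeal_baseChange [Module.FinitePresentation R M] [Module.Flat R S] :
    traceIdeal S (S ⊗[R] M) = (traceIdeal R M).map (algebraMap R S) := by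
  apply le_antisymm
  · refine traceIdeal_le_iff.mpr fun f z ↦ ?_
    have apply_one_tmul_mem (x : M) : f (1 ⊗ₜ x) ∈ (traceIdeal R M).map (algebraMap R S) := by
      simpa [Ideal.smul_top_eq_map] using apply_mem_traceIdeal_smul_top
        (f.restrictScalars R ∘ₗ TensorProduct.mk R S M 1) x
    induction z using TensorProduct.induction_on with
    | zero => simp
    | tmul s x =>
      rw [TensorProduct.tmul_eq_smul_one_tmul, map_smul]
      exact Submodule.smul_mem _ s (apply_one_tmul_mem x)
    | add y z hy hz => exact map_add f y z ▸ add_mem hy hz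
  · refine Ideal.map_le_iff_le_comap.mpr (traceIdeal_le_iff.mpr fun f x ↦ ?_)
    simpa [Algebra.algebraMap_eq_smul_one] using
      apply_mem_traceIdeal (f.baseChange S) (1 ⊗ₜ[R] x)

theorem traceIdeal_baseChange_eq_top_iff [Module.FinitePresentation R M]
    [Module.FaithfullyFlat R S] : traceIdeal S (S ⊗[R] M) = ⊤ ↔ traceIdeal R M = ⊤ := by
  rw [traceIdeal_baseChange, ← Ideal.comap_eq_top_iff (f := algebraMap R S),
    Ideal.comap_map_eq_self_of_faithfullyFlat]

end TraceIdeal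

section HasFreeSummand

open scoped TensorProduct

variable {R S M : Type} [CommRing R] [AddCommGroup M] [Module R M] [CommRing S] [Algebra R S]

theorem hasFreeSummand_iff_exists_dual_apply_eq_one :
    HasFreeSummand R M ↔ ∃ (f : Module.Dual R M) (x : M), f x = 1 := by
  constructor
  · rintro ⟨P, ⟨e⟩⟩
    exact ⟨LinearMap.snd R P R ∘ₗ e.toLinearMap, e.symm (0, 1), by simp⟩
  · rintro ⟨f, x, hx⟩
    have section_of_f : f ∘ₗ LinearMap.toSpanSingleton R M x = LinearMap.id := by ext; simpa
    obtain ⟨e, -⟩ := f.exact_subtype_ker_map.splitSurjectiveEquiv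
      (Submodule.injective_subtype _) ⟨_, section_of_f⟩
    exact ⟨ModuleCat.of R (LinearMap.ker f), ⟨e⟩⟩

theorem HasFreeSummand.traceIdeal_eq_top (h : HasFreeSummand R M) : traceIdeal R M = ⊤ := by
  obtain ⟨f, x, hx⟩ := hasFreeSummand_iff_exists_dual_apply_eq_one.mp h
  exact (Ideal.eq_top_iff_one _).mpr (hx ▸ apply_mem_traceIdeal f x)

theorem hasFreeSummand_iff_traceIdeal_eq_top [IsLocalRing R] :
    HasFreeSummand R M ↔ traceIdeal R M = ⊤ :=
  ⟨HasFreeSummand.traceIdeal_eq_top, fun h ↦ hasFreeSummand_iff_exists_dual_apply_eq_one.mpr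
    (exists_dual_apply_eq_one_of_traceIdeal_eq_top h)⟩

variable (S) in
theorem HasFreeSummand.baseChange (h : HasFreeSummand R M) : HasFreeSummand S (S ⊗[R] M) := by
  obtain ⟨f, x, hx⟩ := hasFreeSummand_iff_exists_dual_apply_eq_one.mp h
  exact hasFreeSummand_iff_exists_dual_apply_eq_one.mpr
    ⟨Module.Dual.baseChange S f, 1 ⊗ₜ x, by simp [hx]⟩

theorem hasFreeSummand_iff_completion_general [IsLocalRing R] [Module.FaithfullyFlat R S]
    [Module.FinitePresentation R M] : HasFreeSummand R M ↔ HasFreeSummand S (S ⊗[R] M) :=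
  ⟨HasFreeSummand.baseChange S, fun h ↦ hasFreeSummand_iff_traceIdeal_eq_top.mpr
    (traceIdeal_baseChange_eq_top_iff.mp h.traceIdeal_eq_top)⟩

end HasFreeSummand

open IsLocalRing in
/-- Lemma 2.6(1). Let `R` be a Noetherian local ring with `m`-adic
completion `R̂`, and `M` a finitely generated `R`-module. Then `M` has a nonzero free
direct summand if and only if `M ⊗_R R̂` has a nonzero free direct summand over `R̂`. -/
theorem hasFreeSummand_iff_completion
    (R : Type) [CommRing R] [IsNoetherianRing R] [IsLocalRing R]
    (M : Type) [AddCommGroup M] [Module R M] (hM : Module.Finite R M) :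
    HasFreeSummand R M ↔
      HasFreeSummand (AdicCompletion (maximalIdeal R) R)
        (TensorProduct R (AdicCompletion (maximalIdeal R) R) M) := by
  have : Module.FaithfullyFlat R (AdicCompletion (maximalIdeal R) R) := .of_flat_of_isLocalHom
  have : Module.FinitePresentation R M := Module.finitePresentation_of_finite R M
  exact hasFreeSummand_iff_completion_general

end Paper
end

section
/- Let R be a Noetherian local ring and let M be a finitely generated R-module. Then there exists a decomposition M ≅ M' ⊕ R^a where M' is a finitely generated R-module with no nonzero free direct summand and a ≥ 0, and this decomposition is unique up to isomorphism: if also M ≅ M'' ⊕ R^b with M'' having no nonzero free direct summand, then M' ≅ M'' and a = b. -/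
/-!
Common definitions: Cohen-Macaulay modules, isolated singularities, stable Hom,
syzygies, transposes, Auslander-Reiten sequences, and the Grothendieck-type groups
`G(CM(R))`, `Ex(CM(R))`, `AR(CM(R))` from the paper
"Syzygies of Cohen-Macaulay modules and Grothendieck groups".

Throughout, the maximal ideal of a local ring is realized as the Jacobson radical
`(⊥ : Ideal R).jacobson` (for a local ring these coincide), which lets the definitions
make sense without a `IsLocalRing` instance argument.
-/

namespace Paper

/-!
The number of free summands that split off from a finitely generated module is bounded by its number
of generators, so a decomposition `M ≅ M' ⊕ R^a` with `a` maximal exists, and maximality forces `M'`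
to have no free summand.

Uniqueness reduces to cancelling `R` from `P ⊕ R ≅ Q ⊕ R`. Whenever `z ∈ P ⊕ R` has a unit as its
second coordinate, `(P ⊕ R) / Rz ≅ P`. Over a local ring some `z` has this property in `P ⊕ R` while
its image has it in `Q ⊕ R`, so `P` and `Q` are isomorphic to the same quotient.
-/

section Rearrangement

variable (R M N P : Type*) [Semiring R] [AddCommMonoid M] [Module R M]
  [AddCommMonoid N] [Module R N] [AddCommMonoid P] [Module R P]

/-- The two right-hand summands of a threefold direct sum may be exchanged. -/
def prodRightComm : ((M × N) × P) ≃ₗ[R] ((M × P) × N) :=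
  LinearEquiv.prodAssoc R M N P ≪≫ₗ
    (LinearEquiv.refl R M).prodCongr (LinearEquiv.prodComm R N P) ≪≫ₗ
    (LinearEquiv.prodAssoc R M P N).symm

/-- One copy of `R` splits off from `M ⊕ R^(n+1)`, leaving `M ⊕ R^n`. -/
def prodFinSuccEquiv (n : ℕ) : (M × (Fin (n + 1) → R)) ≃ₗ[R] ((M × (Fin n → R)) × R) :=
  (LinearEquiv.refl R M).prodCongr (Fin.consLinearEquiv R fun _ : Fin (n + 1) ↦ R).symm ≪≫ₗ
    (LinearEquiv.prodAssoc R M R (Fin n → R)).symm ≪≫ₗ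
    prodRightComm R M R (Fin n → R)

end Rearrangement

section Quotient

variable {R P Q : Type*} [Ring R] [AddCommGroup P] [Module R P] [AddCommGroup Q] [Module R Q]

theorem nonempty_quotient_span_singleton_equiv (z : P × R) (hz : IsUnit z.2) :
    Nonempty (((P × R) ⧸ Submodule.span R {z}) ≃ₗ[R] P) := by
  obtain ⟨u, hu⟩ := hz
  let projAlong : (P × R) →ₗ[R] P :=
    LinearMap.fst R P R - (LinearMap.toSpanSingleton R P ((↑u⁻¹ : R) • z.1)) ∘ₗ LinearMap.snd R P R
  have projAlong_apply (x : P × R) : projAlong x = x.1 - (x.2 * ↑u⁻¹) • z.1 := by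
    simp [projAlong, mul_smul]
  have projAlong_surjective : Function.Surjective projAlong :=
    fun p ↦ ⟨(p, 0), by simp [projAlong_apply]⟩
  have ker_projAlong : LinearMap.ker projAlong = Submodule.span R {z} := by
    ext x
    rw [LinearMap.mem_ker, projAlong_apply, sub_eq_zero, Submodule.mem_span_singleton]
    constructor
    · intro hx
      exact ⟨x.2 * ↑u⁻¹, Prod.ext hx.symm (by simp [← hu])⟩
    · rintro ⟨r, rfl⟩
      simp [← hu]
  exact ⟨Submodule.quotEquivOfEq _ _ ker_projAlong.symm ≪≫ₗ
    projAlong.quotKerEquivOfSurjective projAlong_surjective⟩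

theorem nonempty_equiv_of_isUnit_snd (e : (P × R) ≃ₗ[R] (Q × R)) {z : P × R}
    (hz : IsUnit z.2) (hez : IsUnit (e z).2) : Nonempty (P ≃ₗ[R] Q) := by
  obtain ⟨eP⟩ := nonempty_quotient_span_singleton_equiv z hz
  obtain ⟨eQ⟩ := nonempty_quotient_span_singleton_equiv (e z) hez
  have map_span : (Submodule.span R {z}).map (e : (P × R) →ₗ[R] (Q × R)) =
      Submodule.span R {e z} := by
    simp [Submodule.map_span]
  exact ⟨eP.symm ≪≫ₗ Submodule.Quotient.equiv _ _ e map_span ≪≫ₗ eQ⟩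

end Quotient

section Cancellation

variable {R : Type*} [CommRing R] [IsLocalRing R]

theorem isUnit_add_of_not_isUnit_right {r s : R} (hr : IsUnit r) (hs : ¬ IsUnit s) :
    IsUnit (r + s) := by
  have h : IsUnit ((r + s) + -s) := by rwa [add_neg_cancel_right]
  exact (IsLocalRing.isUnit_or_isUnit_of_isUnit_add h).resolve_right (by rwa [IsUnit.neg_iff])

theorem exists_isUnit_map_and_isUnit_map {X F : Type*} [Add X] [FunLike F X R]
    [AddHomClass F X R] (f g : F) {x y : X} (hx : IsUnit (f x)) (hy : IsUnit (g y)) :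
    ∃ z, IsUnit (f z) ∧ IsUnit (g z) := by
  by_cases hfy : IsUnit (f y)
  · exact ⟨y, hfy, hy⟩
  by_cases hgx : IsUnit (g x)
  · exact ⟨x, hx, hgx⟩
  refine ⟨x + y, ?_, ?_⟩
  · rw [map_add]
    exact isUnit_add_of_not_isUnit_right hx hfy
  · rw [map_add, add_comm]
    exact isUnit_add_of_not_isUnit_right hy hgx

theorem nonempty_equiv_of_prod_self_equiv {P Q : Type*} [AddCommGroup P] [Module R P]
    [AddCommGroup Q] [Module R Q] (e : (P × R) ≃ₗ[R] (Q × R)) : Nonempty (P ≃ₗ[R] Q) := by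
  obtain ⟨z, hz, hez⟩ := exists_isUnit_map_and_isUnit_map
    (LinearMap.snd R P R) (LinearMap.snd R Q R ∘ₗ e) (x := (0, 1)) (y := e.symm (0, 1))
    (by simp) (by simp)
  exact nonempty_equiv_of_isUnit_snd e hz hez

end Cancellation

section FreeSummandRanks

universe u v

/-- The set of all `a` such that `R^a` is, up to isomorphism, a direct summand of `M`. The
complement ranges over the universe of `M`. -/
def freeSummandRanks (R : Type u) (M : Type v) [Ring R] [AddCommGroup M] [Module R M] : Set ℕ :=
  {a | ∃ P : ModuleCat.{v} R, Nonempty (M ≃ₗ[R] (P × (Fin a → R)))}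

theorem zero_mem_freeSummandRanks (R : Type u) (M : Type v) [Ring R] [AddCommGroup M]
    [Module R M] : 0 ∈ freeSummandRanks R M :=
  ⟨ModuleCat.of R M, ⟨LinearEquiv.prodUnique.symm⟩⟩

theorem bddAbove_freeSummandRanks (R : Type u) (M : Type v) [Ring R] [RankCondition R]
    [AddCommGroup M] [Module R M] [Module.Finite R M] : BddAbove (freeSummandRanks R M) := by
  obtain ⟨n, π, hπ⟩ := Module.Finite.exists_fin' R M
  refine ⟨n, ?_⟩
  rintro a ⟨P, ⟨e⟩⟩
  exact le_of_fin_surjective R (LinearMap.snd R P (Fin a → R) ∘ₗ e.toLinearMap ∘ₗ π)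
    (Prod.snd_surjective.comp (e.surjective.comp hπ))

end FreeSummandRanks

section NonfreePart

variable {R : Type} [CommRing R] {M P Q : Type} [AddCommGroup M] [Module R M]
  [AddCommGroup P] [Module R P] [AddCommGroup Q] [Module R Q]

theorem hasFreeSummand_of_equiv_prod_fin_succ {n : ℕ} (e : P ≃ₗ[R] (Q × (Fin (n + 1) → R))) :
    HasFreeSummand R P :=
  ⟨ModuleCat.of R (Q × (Fin n → R)), ⟨e ≪≫ₗ prodFinSuccEquiv R Q n⟩⟩

theorem HasFreeSummand.succ_mem_freeSummandRanks {a : ℕ} (hP : HasFreeSummand R P)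
    (e : M ≃ₗ[R] (P × (Fin a → R))) : a + 1 ∈ freeSummandRanks R M := by
  obtain ⟨Q, ⟨k⟩⟩ := hP
  exact ⟨Q, ⟨e ≪≫ₗ k.prodCongr (LinearEquiv.refl R _) ≪≫ₗ
    prodRightComm R Q R (Fin a → R) ≪≫ₗ (prodFinSuccEquiv R Q a).symm⟩⟩

variable (R M) in
theorem exists_not_hasFreeSummand_equiv_prod [Nontrivial R] [Module.Finite R M] :
    ∃ (M' : ModuleCat.{0} R) (a : ℕ), ¬ HasFreeSummand R M' ∧
      Nonempty (M ≃ₗ[R] (M' × (Fin a → R))) := by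
  obtain ⟨a, ⟨M', ⟨e⟩⟩, ha⟩ := (bddAbove_freeSummandRanks R M).exists_isGreatest_of_nonempty
    ⟨0, zero_mem_freeSummandRanks R M⟩
  refine ⟨M', a, fun hM' ↦ ?_, ⟨e⟩⟩
  exact a.not_succ_le_self (ha (hM'.succ_mem_freeSummandRanks e))

theorem nonempty_equiv_and_eq_of_prod_fin_equiv [IsLocalRing R] (hP : ¬ HasFreeSummand R P)
    (hQ : ¬ HasFreeSummand R Q) {a b : ℕ} (e : (P × (Fin a → R)) ≃ₗ[R] (Q × (Fin b → R))) :
    Nonempty (P ≃ₗ[R] Q) ∧ a = b := by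
  induction a generalizing b with
  | zero =>
    cases b with
    | zero => exact ⟨⟨LinearEquiv.prodUnique.symm ≪≫ₗ e ≪≫ₗ LinearEquiv.prodUnique⟩, rfl⟩
    | succ b =>
      exact absurd (hasFreeSummand_of_equiv_prod_fin_succ (LinearEquiv.prodUnique.symm ≪≫ₗ e)) hP
  | succ a ih =>
    cases b with
    | zero =>
      exact absurd
        (hasFreeSummand_of_equiv_prod_fin_succ (LinearEquiv.prodUnique.symm ≪≫ₗ e.symm)) hQ
    | succ b =>
      obtain ⟨e'⟩ := nonempty_equiv_of_prod_self_equiv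
        ((prodFinSuccEquiv R P a).symm ≪≫ₗ e ≪≫ₗ prodFinSuccEquiv R Q b)
      exact (ih e').imp_right (congrArg Nat.succ)

end NonfreePart

theorem exists_unique_nonfree_part_general
    (R : Type) [CommRing R] [IsLocalRing R]
    (M : Type) [AddCommGroup M] [Module R M] [Module.Finite R M] :
    ∃ (M' : ModuleCat.{0} R) (a : ℕ), ¬ HasFreeSummand R (M' : Type) ∧
      Nonempty (M ≃ₗ[R] (Prod (M' : Type) (Fin a → R))) ∧
      ∀ (M'' : ModuleCat.{0} R) (b : ℕ), ¬ HasFreeSummand R (M'' : Type) →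
        Nonempty (M ≃ₗ[R] (Prod (M'' : Type) (Fin b → R))) →
        (Nonempty ((M' : Type) ≃ₗ[R] (M'' : Type)) ∧ a = b) := by
  obtain ⟨M', a, hM', ⟨e⟩⟩ := exists_not_hasFreeSummand_equiv_prod R M
  refine ⟨M', a, hM', ⟨e⟩, ?_⟩
  rintro M'' b hM'' ⟨k⟩
  exact nonempty_equiv_and_eq_of_prod_fin_equiv hM' hM'' (e.symm ≪≫ₗ k)

/-- Lemma 2.6(2). Every finitely generated module `M` over a Noetherian
local ring decomposes as `M ≅ M' ⊕ R^a` with `M'` having no nonzero free direct summand,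
uniquely up to isomorphism. -/
theorem exists_unique_nonfree_part
    (R : Type) [CommRing R] [IsNoetherianRing R] [IsLocalRing R]
    (M : Type) [AddCommGroup M] [Module R M] (hM : Module.Finite R M) :
    ∃ (M' : ModuleCat.{0} R) (a : ℕ), ¬ HasFreeSummand R (M' : Type) ∧
      Nonempty (M ≃ₗ[R] (Prod (M' : Type) (Fin a → R))) ∧
      ∀ (M'' : ModuleCat.{0} R) (b : ℕ), ¬ HasFreeSummand R (M'' : Type) →
        Nonempty (M ≃ₗ[R] (Prod (M'' : Type) (Fin b → R))) →
        (Nonempty ((M' : Type) ≃ₗ[R] (M'' : Type)) ∧ a = b) := by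
  exact exists_unique_nonfree_part_general R M

end Paper
end
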